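/- Let (C, D) be an out-j collapsible pair with D nonempty. Then D is contractible if and only if D is collapsible, and both are equivalent to the existence of an out-j collapsing sequence for (C,D) with no outwardly matched faces. -/

import Mathlib

/-- An abstract (finite, graded) face poset carrying a dimension function and a
codimension-one face ("facet") relation, modelling the combinatorics of a
finite regular CW complex. -/
structure MorseSetup (F : Type) where
  dim : F → ℕ
  facet : F → F → Prop
  facet_dim : ∀ σ τ, facet σ τ → dim τ = dim σ + 1

/-- A discrete vector field: pairs `(σ, Σ)` with `σ` a codimension-one face of `Σ`,
no face belonging to two different pairs. -/
def IsDVF {F : Type} (S : MorseSetup F) (Φ : Finset (F × F)) : Prop :=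
  (∀ p ∈ Φ, S.facet p.1 p.2) ∧
  ∀ p ∈ Φ, ∀ q ∈ Φ, p ≠ q → p.1 ≠ q.1 ∧ p.1 ≠ q.2 ∧ p.2 ≠ q.1 ∧ p.2 ≠ q.2

/-- Existence of a closed gradient path `(σ_0,Σ_0),…,(σ_k,Σ_k)`, `k ≥ 1`,
with `σ_{i+1} ≠ σ_i`, `σ_{i+1}` a facet of `Σ_i` and `σ_0 = σ_k`. -/
def HasClosedGradientPath {F : Type} (S : MorseSetup F) (Φ : Finset (F × F)) : Prop :=
  ∃ (k : ℕ) (σ T : ℕ → F), 1 ≤ k ∧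
    (∀ i ≤ k, (σ i, T i) ∈ Φ) ∧
    (∀ i < k, σ (i + 1) ≠ σ i ∧ S.facet (σ (i + 1)) (T i)) ∧
    σ 0 = σ k

/-- A Morse matching is a discrete vector field without closed gradient paths. -/
def IsMorseMatching {F : Type} (S : MorseSetup F) (Φ : Finset (F × F)) : Prop :=
  IsDVF S Φ ∧ ¬ HasClosedGradientPath S Φ

/-- A face is critical if it belongs to no matching pair. -/
def IsCritical {F : Type} (Φ : Finset (F × F)) (x : F) : Prop :=
  ∀ p ∈ Φ, x ≠ p.1 ∧ x ≠ p.2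

/-- A face `τ` of the subcomplex `D` is outwardly matched if it is matched with
a face not belonging to `D`. -/
def OutwardlyMatched {F : Type} (Φ : Finset (F × F)) (D : Finset F) (τ : F) : Prop :=
  τ ∈ D ∧ ∃ p ∈ Φ, (p.1 = τ ∧ p.2 ∉ D) ∨ (p.2 = τ ∧ p.1 ∉ D)

/-- A collapsing sequence from the whole complex to the vertex `v`: a Morse matching
whose unique critical face is the vertex `v`. -/
def IsCollapsingSeq {F : Type} (S : MorseSetup F) (Φ : Finset (F × F)) (v : F) : Prop :=
  IsMorseMatching S Φ ∧ S.dim v = 0 ∧ ∀ x, IsCritical Φ x ↔ x = v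

/-- `(C, D)` is out-`j` collapsible via `Φ`: `Φ` is a collapsing sequence from `C`
to a vertex of `D` in which every outwardly matched face has dimension `j`. -/
def IsOutJCollapsingSeq {F : Type} (S : MorseSetup F) (Φ : Finset (F × F))
    (D : Finset F) (j : ℕ) : Prop :=
  (∃ v ∈ D, IsCollapsingSeq S Φ v) ∧ ∀ τ, OutwardlyMatched Φ D τ → S.dim τ = j

/-- `D` is a subcomplex: closed under passing to codimension-one faces. -/
def IsSubcomplex {F : Type} (S : MorseSetup F) (D : Finset F) : Prop :=
  ∀ σ τ, S.facet σ τ → τ ∈ D → σ ∈ D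

open Metric in
/-- A (finite) regular CW structure on the topological space `X`, with faces indexed by `F`:
each face has a characteristic map from a closed ball which is a continuous injection
(regularity), open cells are pairwise disjoint and cover `X`, and the boundary of each cell
lies in the union of the closed cells of lower dimension. -/
structure RegularCW (F : Type) [Fintype F] (X : Type) [TopologicalSpace X] where
  dim : F → ℕ
  charMap : (f : F) → (closedBall (0 : EuclideanSpace ℝ (Fin (dim f))) 1) → X
  continuous_charMap : ∀ f, Continuous (charMap f)
  injective_charMap : ∀ f, Function.Injective (charMap f)
  disjoint_openCells : ∀ f g, f ≠ g →
    Disjoint (charMap f '' {x | ‖(x : EuclideanSpace ℝ (Fin (dim f)))‖ < 1})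
      (charMap g '' {x | ‖(x : EuclideanSpace ℝ (Fin (dim g)))‖ < 1})
  cover : (⋃ f, Set.range (charMap f)) = Set.univ
  boundary : ∀ f, charMap f '' {x | ‖(x : EuclideanSpace ℝ (Fin (dim f)))‖ = 1} ⊆
    ⋃ g ∈ {g | dim g < dim f}, Set.range (charMap g)

/-- The closed cell of the face `f`. -/
def RegularCW.cell {F X : Type} [Fintype F] [TopologicalSpace X]
    (C : RegularCW F X) (f : F) : Set X :=
  Set.range (C.charMap f)

/-- The face structure underlying a regular CW complex: `σ` is a codimension-one face of
`τ` if the closed cell of `σ` is contained in that of `τ` and dimensions differ by one. -/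
def RegularCW.toSetup {F X : Type} [Fintype F] [TopologicalSpace X]
    (C : RegularCW F X) : MorseSetup F where
  dim := C.dim
  facet := fun σ τ => σ ≠ τ ∧ C.cell σ ⊆ C.cell τ ∧ C.dim τ = C.dim σ + 1
  facet_dim := fun _ _ h => h.2.2

/-- `D` is a subcomplex of the regular CW complex: it is closed under taking faces. -/
def RegularCW.Subcomplex {F X : Type} [Fintype F] [TopologicalSpace X]
    (C : RegularCW F X) (D : Finset F) : Prop :=
  ∀ σ τ, C.cell σ ⊆ C.cell τ → τ ∈ D → σ ∈ D

/-- The geometric realization (underlying point set) of the subcomplex `D`. -/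
def RegularCW.real {F X : Type} [Fintype F] [TopologicalSpace X]
    (C : RegularCW F X) (D : Finset F) : Set X :=
  ⋃ f ∈ D, C.cell f

/-- A collapsing sequence of the subcomplex `D` onto a vertex `v ∈ D`: a Morse matching
all of whose pairs consist of faces of `D`, whose unique critical face in `D` is `v`. -/
def IsCollapsingSeqOn {F : Type} (S : MorseSetup F) (Φ : Finset (F × F))
    (D : Finset F) (v : F) : Prop :=
  IsMorseMatching S Φ ∧ v ∈ D ∧ S.dim v = 0 ∧
    (∀ p ∈ Φ, p.1 ∈ D ∧ p.2 ∈ D) ∧ ∀ x ∈ D, (IsCritical Φ x ↔ x = v)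

/-!
A collapsing sequence `Φ` of `C` whose pairs inside `D` are kept and whose other pairs are discarded
is a Morse matching on `D` whose critical faces are the vertex `v` and the outwardly matched faces.
Acyclicity lets one undo this matching one pair or one critical face at a time, so the realization
of `D` arises from `v` by elementary expansions, which are homotopy equivalences, and by attaching
the outwardly matched cells, all of dimension `j`.

Without outwardly matched faces, `D` is therefore both collapsible and contractible. With at least
one, `D` has an essential map to the `j`-sphere. The first attached cell `x` is glued to a
contractible space `A`: collapsing `A` gives a map to the sphere, and it is essential because the
boundary sphere of `x` bounds a disk in `A` that caps `x` off to a sphere on which the map is never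
antipodal to the identity; a nullhomotopic such map would extend over the ball and contradict
Brouwer's fixed point theorem. The map extends over all cells of dimension `j` attached later, since
it is a map into a sphere defined on a closed subset of a `j`-dimensional space.

The structure `RegularCW` only asks for boundaries of cells to lie in cells of lower dimension, so
that the boundary of a cell is a union of cells has to be proved. This is where invariance of domain
enters: an open subset of the boundary sphere of `f` inside an open cell of dimension `dim f - 1` is
open in that cell, and it spreads over the whole cell by connectedness.
-/

open Filter Function Metric Module Set Topology MeasureTheory

section BrouwerFixedPoint

theorem lipschitzWith_indicator_of_frontier {E F : Type*} [NormedAddCommGroup E] [NormedSpace ℝ E]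
    [NormedAddCommGroup F] {s : Set E} {g : E → F} {K : NNReal} (hs : IsClosed s)
    (hg : LipschitzOnWith K g s) (hg₀ : ∀ x ∈ frontier s, g x = 0) :
    LipschitzWith K (s.indicator g) := by
  have crossing : ∀ x ∈ s, ∀ y ∉ s, dist (s.indicator g x) (s.indicator g y) ≤ K * dist x y := by
    intro x hx y hy
    obtain ⟨z, hz, hzs, hzc⟩ := isPreconnected_closed_iff.1 (convex_segment x y).isPreconnected
      s (closure sᶜ) hs isClosed_closure (fun z _ ↦ (em (z ∈ s)).imp_right (subset_closure ·))
      ⟨x, left_mem_segment ℝ x y, hx⟩ ⟨y, right_mem_segment ℝ x y, subset_closure hy⟩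
    rw [Set.indicator_of_mem hx, Set.indicator_of_notMem hy, ← hg₀ z ⟨subset_closure hzs, by
      rwa [closure_compl] at hzc⟩]
    calc dist (g x) (g z) ≤ K * dist x z := hg.dist_le_mul x hx z hzs
      _ ≤ K * dist x y := by
        gcongr
        linarith [dist_add_dist_of_mem_segment hz, dist_nonneg (x := z) (y := y)]
  refine LipschitzWith.of_dist_le_mul fun x y ↦ ?_
  by_cases hx : x ∈ s <;> by_cases hy : y ∈ s
  · simpa only [Set.indicator_of_mem, hx, hy] using hg.dist_le_mul x hx y hy
  · exact crossing x hx y hy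
  · simpa only [dist_comm] using crossing y hy x hx
  · simp only [Set.indicator_of_notMem, hx, hy, not_false_eq_true, dist_self]
    positivity

section Det

variable {E : Type*} [NormedAddCommGroup E] [NormedSpace ℝ E]

theorem exists_polynomial_eval_eq_det_one_add_smul [FiniteDimensional ℝ E] (A : E →L[ℝ] E) :
    ∃ P : Polynomial ℝ, P.natDegree ≤ finrank ℝ E ∧ ∀ t : ℝ, P.eval t = (1 + t • A).det := by
  let b := Module.finBasis ℝ E
  let M := LinearMap.toMatrix b b (A : E →ₗ[ℝ] E)
  refine ⟨Matrix.det ((Polynomial.X : Polynomial ℝ) • M.map Polynomial.C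
    + (1 : Matrix _ _ ℝ).map Polynomial.C), ?_, fun t ↦ ?_⟩
  · simpa only [Fintype.card_fin] using Polynomial.natDegree_det_X_add_C_le M 1
  · have toMatrix_eq : LinearMap.toMatrix b b (1 + t • A : E →L[ℝ] E) = 1 + t • M := by
      simp only [ContinuousLinearMap.toLinearMap_add, ContinuousLinearMap.toLinearMap_smul,
        map_add, map_smul, M, add_left_inj]
      exact LinearMap.toMatrix_one b
    rw [ContinuousLinearMap.det, ← LinearMap.det_toMatrix b, toMatrix_eq,
      ← Polynomial.coe_evalRingHom, RingHom.map_det]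
    congr 1
    ext i j
    simp only [Polynomial.coe_evalRingHom, RingHom.mapMatrix_apply, Matrix.map_apply,
      Matrix.add_apply, Matrix.smul_apply, Matrix.one_apply, smul_eq_mul, Polynomial.eval_add,
      Polynomial.eval_mul, Polynomial.eval_X, Polynomial.eval_C]
    exact add_comm _ _

theorem exists_det_one_add_eq_sum [FiniteDimensional ℝ E] {t : ℕ → ℝ} (ht : Injective t) :
    ∃ l : ℕ → ℝ, ∑ i ∈ Finset.range (finrank ℝ E + 1), l i = 1 ∧ ∀ A : E →L[ℝ] E,
      (1 + A).det = ∑ i ∈ Finset.range (finrank ℝ E + 1), l i * (1 + t i • A).det := by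
  let s := Finset.range (finrank ℝ E + 1)
  refine ⟨fun i ↦ (Lagrange.basis s t i).eval 1, ?_, fun A ↦ ?_⟩
  · rw [← Polynomial.eval_finsetSum, Lagrange.sum_basis ht.injOn (by simp), Polynomial.eval_one]
  · obtain ⟨P, hdeg, hP⟩ := exists_polynomial_eval_eq_det_one_add_smul A
    have hlt : P.degree < s.card := by
      refine Polynomial.degree_le_natDegree.trans_lt ?_
      rw [Finset.card_range]
      exact_mod_cast Nat.lt_succ_of_le hdeg
    have h := congrArg (Polynomial.eval 1) (Lagrange.eq_interpolate ht.injOn hlt)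
    simpa only [Lagrange.interpolate_apply, Polynomial.eval_finsetSum, Polynomial.eval_mul,
      Polynomial.eval_C, hP, one_smul, mul_comm] using h

theorem det_one_add_pos [CompleteSpace E] {A : E →L[ℝ] E} (hA : ‖A‖ < 1) :
    0 < (1 + A).det := by
  have det_ne_zero : ∀ s ∈ Icc (0 : ℝ) 1, (1 + s • A).det ≠ 0 := by
    intro s hs
    have hsA : ‖-(s • A)‖ < 1 := by
      rw [norm_neg, norm_smul, Real.norm_of_nonneg hs.1]
      exact (mul_le_of_le_one_left (norm_nonneg A) hs.2).trans_lt hA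
    have hunit : IsUnit (1 + s • A) := by
      simpa only [sub_neg_eq_add] using isUnit_one_sub_of_norm_lt_one hsA
    exact ((hunit.map (ContinuousLinearMap.toLinearMapRingHom)).map LinearMap.det).ne_zero
  by_contra! hdet
  have hcont : Continuous fun s : ℝ ↦ (1 + s • A).det :=
    ContinuousLinearMap.continuous_det.comp (by fun_prop)
  obtain ⟨s, hs, h⟩ := intermediate_value_Icc' zero_le_one hcont.continuousOn
    (show (0 : ℝ) ∈ Icc _ _ from ⟨by simpa only [one_smul] using hdet, by
      simp [ContinuousLinearMap.det]⟩)
  exact det_ne_zero s hs h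

theorem det_eq_zero_of_forall_norm_eq_one {E : Type*} [NormedAddCommGroup E] [InnerProductSpace ℝ E]
    [FiniteDimensional ℝ E] {r : E → E} {L : E →L[ℝ] E} {x : E} (hr : HasFDerivAt r L x)
    (hnorm : ∀ y, ‖r y‖ = 1) : L.det = 0 := by
  have orthogonal : ∀ v, inner ℝ (r x) (L v) = 0 := by
    intro v
    have hconst : (fun y ↦ ‖r y‖ ^ 2) = fun _ ↦ (1 : ℝ) := by simp only [hnorm, one_pow]
    have h := congrArg (fun T ↦ T v) ((hconst ▸ hr.norm_sq).unique (hasFDerivAt_const (1 : ℝ) x))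
    simpa using h
  by_contra hdet
  obtain ⟨v, hv⟩ := (ContinuousLinearMap.toContinuousLinearEquivOfDetNeZero L hdet).surjective (r x)
  have h := orthogonal v
  rw [show L v = r x from hv, real_inner_self_eq_norm_sq, hnorm] at h
  norm_num at h

end Det

variable {E : Type*} [NormedAddCommGroup E]

theorem bijective_id_add_of_lipschitzWith [CompleteSpace E] {u : E → E} {K : NNReal} (hK : K < 1)
    (hu : LipschitzWith K u) : Bijective fun x ↦ x + u x := by
  constructor
  · intro x y hxy
    have hle := hu.dist_le_mul x y
    have hsub : u x - u y = -(x - y) := by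
      rw [neg_sub, sub_eq_sub_iff_add_eq_add, add_comm]
      exact hxy
    rw [dist_eq_norm, dist_eq_norm, hsub, norm_neg] at hle
    by_contra hne
    exact absurd hle (not_le.2 (mul_lt_of_lt_one_left (norm_pos_iff.2 (sub_ne_zero.2 hne)) hK))
  · intro y
    have hcontr : ContractingWith K fun x ↦ y - u x :=
      ⟨hK, LipschitzWith.of_dist_le_mul fun a b ↦ by
        simpa only [dist_sub_left] using hu.dist_le_mul a b⟩
    exact ⟨hcontr.fixedPoint, add_eq_of_eq_sub hcontr.fixedPoint_isFixedPt.symm⟩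

theorem setIntegral_det_one_add_smul_eq [NormedSpace ℝ E] [FiniteDimensional ℝ E]
    [MeasurableSpace E] [BorelSpace E] (μ : Measure E) [μ.IsAddHaarMeasure]
    {s : Set E} (hs : MeasurableSet s) {g : E → E} {A : E → E →L[ℝ] E} {K : NNReal}
    (hg : LipschitzWith K g) (hg₀ : ∀ x ∉ s, g x = 0) (hA : ∀ x ∈ s, HasFDerivAt g (A x) x)
    {t : ℝ} (ht : 0 < t) (htK : t * K < 1) :
    ∫ x in s, (1 + t • A x).det ∂μ = μ.real s := by
  let f : E → E := fun x ↦ x + t • g x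
  obtain ⟨hinj, hsurj⟩ : Bijective f :=
    bijective_id_add_of_lipschitzWith
      (by rwa [← NNReal.coe_lt_one, NNReal.coe_mul, coe_nnnorm, Real.norm_of_nonneg ht.le])
      ((lipschitzWith_smul t).comp hg)
  have hfix : ∀ x ∉ s, f x = x := fun x hx ↦ by simp only [f, hg₀ x hx, smul_zero, add_zero]
  have himage : f '' s = s := by
    rw [← compl_inj_iff, ← image_compl_eq ⟨hinj, hsurj⟩]
    exact (image_congr hfix).trans (image_id _)
  have hdet : ∀ x ∈ s, 0 < (1 + t • A x).det := by
    intro x hx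
    refine det_one_add_pos ?_
    rw [norm_smul, Real.norm_of_nonneg ht.le, ← (hA x hx).fderiv]
    exact (mul_le_mul_of_nonneg_left (norm_fderiv_le_of_lipschitz ℝ hg) ht.le).trans_lt htK
  have hcov := integral_image_eq_integral_abs_det_fderiv_smul μ hs
    (fun x hx ↦ ((hasFDerivAt_id x).add ((hA x hx).const_smul t)).hasFDerivWithinAt) hinj.injOn
    (fun _ ↦ (1 : ℝ))
  change ∫ _ in f '' s, _ ∂μ = _ at hcov
  rw [himage, setIntegral_const, smul_eq_mul, mul_one] at hcov
  rw [hcov]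
  refine setIntegral_congr_fun hs fun x hx ↦ ?_
  rw [smul_eq_mul, mul_one]
  exact (abs_of_pos (hdet x hx)).symm

theorem setIntegral_det_one_add_eq [NormedSpace ℝ E] [FiniteDimensional ℝ E]
    [MeasurableSpace E] [BorelSpace E] (μ : Measure E) [IsFiniteMeasureOnCompacts μ]
    {s : Set E} (hs : Bornology.IsBounded s) {A : E → E →L[ℝ] E} (hA : Continuous A) {K : NNReal}
    (h : ∀ t : ℝ, 0 < t → t * K < 1 → ∫ x in s, (1 + t • A x).det ∂μ = μ.real s) :
    ∫ x in s, (1 + A x).det ∂μ = μ.real s := by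
  let t : ℕ → ℝ := fun i ↦ (K + 1 + i)⁻¹
  have ht : Injective t := fun i j hij ↦
    Nat.cast_injective (add_left_cancel (inv_injective hij))
  obtain ⟨l, hl, hdet⟩ := exists_det_one_add_eq_sum (E := E) ht
  have hint : ∀ i, IntegrableOn (fun x ↦ l i * (1 + t i • A x).det) s μ := by
    intro i
    have hcont : Continuous fun x ↦ (1 + t i • A x).det :=
      ContinuousLinearMap.continuous_det.comp (by fun_prop)
    exact ((hcont.continuousOn.integrableOn_compact hs.isCompact_closure).mono_set
      subset_closure).const_mul (l i)
  rw [show (fun x ↦ (1 + A x).det) = _ from funext fun x ↦ hdet (A x),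
    integral_finsetSum _ fun i _ ↦ hint i]
  calc ∑ i ∈ Finset.range (finrank ℝ E + 1), ∫ x in s, l i * (1 + t i • A x).det ∂μ
      = ∑ i ∈ Finset.range (finrank ℝ E + 1), l i * μ.real s := by
        refine Finset.sum_congr rfl fun i _ ↦ ?_
        rw [integral_const_mul, h (t i) (by positivity)]
        rw [inv_mul_lt_one₀ (by positivity)]
        linarith [Nat.cast_nonneg (α := ℝ) i]
    _ = μ.real s := by rw [← Finset.sum_mul, hl, one_mul]

variable [InnerProductSpace ℝ E] [FiniteDimensional ℝ E]

theorem exists_ne_self_of_contDiff_of_forall_norm_eq_one {r : E → E} (hr : ContDiff ℝ 1 r)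
    (hnorm : ∀ x, ‖r x‖ = 1) :
    ∃ x, ‖x‖ = 1 ∧ r x ≠ x := by
  by_contra! hfix
  borelize E
  let μ : Measure E := Measure.addHaar
  have hdiff : Differentiable ℝ r := hr.differentiable one_ne_zero
  have hsub : ContDiff ℝ 1 fun x ↦ r x - x := hr.sub contDiff_id
  have hfix' : ∀ x ∈ frontier (closedBall (0 : E) 1), r x - x = 0 := fun x hx ↦ by
    rw [hfix x (mem_sphere_zero_iff_norm.1 (frontier_closedBall_subset_sphere hx)), sub_self]
  obtain ⟨K, hK⟩ := hsub.contDiffOn.exists_lipschitzOnWith one_ne_zero (convex_closedBall (0 : E) 1)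
    (isCompact_closedBall 0 1)
  have hg := lipschitzWith_indicator_of_frontier isClosed_closedBall hK hfix'
  let A : E → E →L[ℝ] E := fun x ↦ fderiv ℝ r x - 1
  have hA : Continuous A := (hr.continuous_fderiv one_ne_zero).sub continuous_const
  have hg₀ : ∀ x ∉ ball (0 : E) 1, (closedBall (0 : E) 1).indicator (fun x ↦ r x - x) x = 0 := by
    intro x hx
    refine indicator_apply_eq_zero.2 fun hx' ↦ ?_
    rw [mem_ball_zero_iff, not_lt] at hx
    rw [hfix x (le_antisymm (mem_closedBall_zero_iff.1 hx') hx), sub_self]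
  have hgA : ∀ x ∈ ball (0 : E) 1,
      HasFDerivAt ((closedBall (0 : E) 1).indicator fun x ↦ r x - x) (A x) x := by
    intro x hx
    refine ((hdiff x).hasFDerivAt.sub (hasFDerivAt_id x)).congr_of_eventuallyEq ?_
    filter_upwards [isOpen_ball.mem_nhds hx] with y hy
    exact Set.indicator_of_mem (ball_subset_closedBall hy) _
  have hvol := setIntegral_det_one_add_eq μ isBounded_ball hA fun t ht htK ↦
    setIntegral_det_one_add_smul_eq μ measurableSet_ball hg hg₀ hgA ht htK
  have hdet : ∀ x, (1 + A x).det = 0 := fun x ↦ by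
    rw [add_sub_cancel]
    exact det_eq_zero_of_forall_norm_eq_one (hdiff x).hasFDerivAt hnorm
  simp only [hdet, integral_zero] at hvol
  exact (ENNReal.toReal_pos (measure_ball_pos μ 0 one_pos).ne' measure_ball_lt_top.ne).ne hvol

theorem exists_eq_zero_of_eqOn_compl_ball {G : E → E} (hG : Continuous G)
    (hid : ∀ x, 1 ≤ ‖x‖ → G x = x) : ∃ x, G x = 0 := by
  by_contra! hne
  obtain ⟨g, hg, hdist, hsupp⟩ := (hG.sub continuous_id).exists_contDiff_approx 1 hG.norm
    fun x ↦ norm_pos_iff.2 (hne x)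
  have hsum : ∀ x, x + g x ≠ 0 := by
    intro x hx
    have h := hdist x
    rw [← neg_eq_of_add_eq_zero_right hx, dist_eq_norm, Pi.sub_apply, id, sub_sub_eq_add_sub,
      neg_add_cancel, zero_sub, norm_neg] at h
    exact lt_irrefl _ h
  have hnorm : ∀ x, ‖x + g x‖ ≠ 0 := fun x ↦ norm_ne_zero_iff.2 (hsum x)
  have hcont : ContDiff ℝ 1 fun x ↦ x + g x := contDiff_id.add hg
  obtain ⟨x, hx, hrx⟩ := exists_ne_self_of_contDiff_of_forall_norm_eq_one
    (((hcont.norm ℝ hsum).inv hnorm).smul hcont) fun x ↦ norm_smul_inv_norm (𝕜 := ℝ) (hsum x)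
  have hgx : g x = 0 := by
    by_contra h
    simpa [hid x hx.ge] using hsupp h
  simp [hgx, hx] at hrx

theorem exists_fixedPoint_closedBall (f : C(closedBall (0 : E) 1, closedBall (0 : E) 1)) :
    ∃ x, f x = x := by
  obtain ⟨F, hF⟩ := f.exists_restrict_eq isClosed_closedBall
  let θ : E → ℝ := fun x ↦ max 0 (min 1 (2 * (1 - ‖x‖)))
  obtain ⟨x, hx⟩ := exists_eq_zero_of_eqOn_compl_ball
    (G := fun x ↦ x - (θ x / 2) • (F ((2 : ℝ) • x) : E)) (by fun_prop) fun x hx ↦ by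
      have hθ : θ x = 0 := max_eq_left (min_le_of_right_le (by linarith))
      rw [hθ, zero_div, zero_smul, sub_zero]
  rw [sub_eq_zero] at hx
  have hFle : ‖(F ((2 : ℝ) • x) : E)‖ ≤ 1 := mem_closedBall_zero_iff.1 (F _).2
  have hxle : ‖x‖ ≤ 1 / 2 := by
    have hθle : θ x ≤ 1 := max_le zero_le_one (min_le_left _ _)
    have hθnn : 0 ≤ θ x := le_max_left _ _
    rw [hx, norm_smul, Real.norm_of_nonneg (div_nonneg hθnn zero_le_two)]
    exact (mul_le_of_le_one_right (div_nonneg hθnn zero_le_two) hFle).trans (by linarith)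
  have hθ : θ x = 1 := by
    rw [show θ x = max 0 _ from rfl, min_eq_left (by linarith), max_eq_right zero_le_one]
  have hmem : (2 : ℝ) • x ∈ closedBall (0 : E) 1 := by
    rw [mem_closedBall_zero_iff, norm_smul, Real.norm_two]
    linarith
  refine ⟨⟨(2 : ℝ) • x, hmem⟩, Subtype.ext ?_⟩
  rw [hθ] at hx
  rw [← hF, ContinuousMap.restrict_apply]
  change (F ((2 : ℝ) • x) : E) = (2 : ℝ) • x
  conv_rhs => rw [hx, smul_smul, mul_one_div_cancel two_ne_zero, one_smul]

end BrouwerFixedPoint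

section InvarianceOfDomain

/-- The map pushing the punctured ball of radius `ε` around `c` radially onto its sphere and fixing
everything outside. Its value at `c`, where it is discontinuous, is the junk value `c`. -/
noncomputable def radialPush {E : Type*} [NormedAddCommGroup E] [NormedSpace ℝ E] (c : E) (ε : ℝ)
    (y : E) : E :=
  c + max 1 (ε / ‖y - c‖) • (y - c)

section RadialPush

variable {E : Type*} [NormedAddCommGroup E] [NormedSpace ℝ E] {c y : E} {ε : ℝ}

theorem radialPush_of_le (hε : 0 < ε) (hy : ε ≤ dist y c) : radialPush c ε y = y := by
  rw [dist_eq_norm] at hy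
  rw [radialPush, max_eq_left ((div_le_one (hε.trans_le hy)).2 hy), one_smul, add_sub_cancel]

theorem dist_radialPush (hε : 0 < ε) (hyc : y ≠ c) (hy : dist y c ≤ ε) :
    dist (radialPush c ε y) c = ε := by
  rw [dist_eq_norm] at hy
  have hpos : 0 < ‖y - c‖ := norm_sub_pos_iff.2 hyc
  rw [radialPush, max_eq_right ((one_le_div hpos).2 hy), dist_self_add_left, norm_smul,
    Real.norm_of_nonneg (by positivity), div_mul_cancel₀ _ hpos.ne']

theorem dist_apply_radialPush_le {E' : Type*} [SeminormedAddCommGroup E'] {G H : E → E'} {a b : ℝ}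
    (hε : 0 < ε) (hG : ∀ y, dist y c ≤ ε → ‖G y‖ ≤ a) (hHG : ∀ y, dist (H y) (G y) ≤ b)
    (hyc : y ≠ c) : dist (G y) (H (radialPush c ε y)) ≤ 2 * a + b := by
  have hnear := hHG (radialPush c ε y)
  rw [dist_comm] at hnear
  obtain hy | hy := le_total ε (dist y c)
  · rw [radialPush_of_le hε hy] at hnear ⊢
    linarith [hG c ((dist_self c).trans_le hε.le), norm_nonneg (G c)]
  · have hpush := hG _ (dist_radialPush hε hyc hy).le
    linarith [hG y hy, dist_triangle (G y) (G (radialPush c ε y)) (H (radialPush c ε y)),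
      dist_le_norm_add_norm (G y) (G (radialPush c ε y))]

theorem continuousOn_radialPush : ContinuousOn (radialPush c ε) {c}ᶜ := by
  have hdiv : ContinuousOn (fun y ↦ ε / ‖y - c‖) {c}ᶜ :=
    continuousOn_const.div (by fun_prop) fun y hy ↦ (norm_sub_pos_iff.2 hy).ne'
  exact continuousOn_const.add ((continuousOn_const.sup hdiv).smul (by fun_prop))

end RadialPush

theorem exists_continuousMap_near_ne_zero {E E' : Type*} [NormedAddCommGroup E] [NormedSpace ℝ E]
    [FiniteDimensional ℝ E] [NormedAddCommGroup E'] [NormedSpace ℝ E'] {N : Set E}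
    (hN : ∀ P : E → E', ContDiff ℝ 1 P → Dense (P '' N)ᶜ) (G : C(E, E')) {δ : ℝ} (hδ : 0 < δ) :
    ∃ H : C(E, E'), (∀ y, dist (H y) (G y) < δ) ∧ ∀ y ∈ N, H y ≠ 0 := by
  obtain ⟨P, hP, hPG, -⟩ := G.continuous.exists_contDiff_approx 1 (ε := fun _ ↦ δ / 2)
    continuous_const fun _ ↦ half_pos hδ
  obtain ⟨c, hcP, hc⟩ := (hN P hP).exists_dist_lt 0 (half_pos hδ)
  rw [dist_zero_left] at hc
  refine ⟨⟨fun y ↦ P y - c, hP.continuous.sub continuous_const⟩, fun y ↦ ?_, fun y hy h ↦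
    hcP ⟨y, hy, sub_eq_zero.1 h⟩⟩
  calc dist (P y - c) (G y) ≤ dist (P y - c) (P y) + dist (P y) (G y) := dist_triangle _ _ _
    _ < δ := by
      rw [dist_self_sub_left]
      linarith [hPG y]

theorem dense_compl_image_sphere_of_contDiff {E : Type*} [NormedAddCommGroup E] [NormedSpace ℝ E]
    [FiniteDimensional ℝ E] (c : E) {ε : ℝ} (hε : ε ≠ 0) {P : E → E} (hP : ContDiff ℝ 1 P) :
    Dense (P '' sphere c ε)ᶜ := by
  borelize E
  let μ : Measure E := Measure.addHaar
  have himage : μ (P '' sphere c ε) = 0 :=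
    addHaar_image_eq_zero_of_differentiableOn_of_addHaar_eq_zero μ
      (hP.differentiable one_ne_zero).differentiableOn (Measure.addHaar_sphere_of_ne_zero μ c hε)
  exact Measure.dense_of_ae (measure_eq_zero_iff_ae_notMem.1 himage)

variable {E : Type*} [NormedAddCommGroup E] [InnerProductSpace ℝ E] [FiniteDimensional ℝ E]

theorem exists_eq_zero_of_dist_le_one (g : C(closedBall (0 : E) 1, E))
    (hg : ∀ x : closedBall (0 : E) 1, dist (x : E) (g x) ≤ 1) : ∃ x, g x = 0 := by
  obtain ⟨x, hx⟩ := exists_fixedPoint_closedBall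
    ⟨fun x ↦ ⟨x - g x, mem_closedBall_zero_iff.2 (dist_eq_norm (x : E) (g x) ▸ hg x)⟩,
      by fun_prop⟩
  exact ⟨x, sub_eq_self.1 (congrArg Subtype.val hx)⟩

-- If `c` were missed, a left inverse of `f`, perturbed off `0` and precomposed with the push away
-- from `c`, would remain within distance `1` of a left inverse but have no zero.
theorem mem_range_of_leftInverse (f : C(closedBall (0 : E) 1, E)) (G : C(E, E))
    (hGf : ∀ x, G (f x) = x) {c : E} {ε : ℝ} (hε : dist (f ⟨0, by simp⟩) c < ε)
    (hG : ∀ y, dist y c ≤ ε → ‖G y‖ ≤ 1 / 4) : c ∈ range f := by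
  by_contra hc
  have hε₀ : 0 < ε := dist_nonneg.trans_lt hε
  have hfc : ∀ x, f x ≠ c := fun x hx ↦ hc ⟨x, hx⟩
  obtain ⟨δ, hδ, hfar⟩ : ∃ δ > 0, ∀ x : closedBall (0 : E) 1, ε ≤ dist (f x) c → δ ≤ ‖(x : E)‖ := by
    have hcomp : IsCompact {x | ε ≤ dist (f x) c} :=
      (isClosed_le continuous_const (by fun_prop)).isCompact
    obtain ⟨δ, hδ, h⟩ := hcomp.exists_forall_le' (a := 0)
      (f := fun x : closedBall (0 : E) 1 ↦ ‖(x : E)‖) (by fun_prop) fun x hx ↦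
      norm_pos_iff.2 fun h₀ ↦ by
        obtain rfl : x = ⟨0, by simp⟩ := Subtype.ext h₀
        exact absurd hε (not_lt.2 hx)
    exact ⟨δ, hδ, h⟩
  obtain ⟨H, hHG, hH⟩ := exists_continuousMap_near_ne_zero
    (fun P ↦ dense_compl_image_sphere_of_contDiff c hε₀.ne') G (δ := min δ (1 / 4)) (by positivity)
  have hnear : ∀ x : closedBall (0 : E) 1, dist (x : E) (H (radialPush c ε (f x))) ≤ 1 := by
    intro x
    have hle := dist_apply_radialPush_le hε₀ hG
      (fun y ↦ (hHG y).le.trans (min_le_right _ _)) (hfc x)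
    rw [hGf] at hle
    linarith
  obtain ⟨x, hx⟩ := exists_eq_zero_of_dist_le_one ⟨fun x ↦ H (radialPush c ε (f x)),
    H.continuous.comp (continuousOn_radialPush.comp_continuous f.continuous hfc)⟩ hnear
  rw [ContinuousMap.coe_mk] at hx
  rcases le_or_gt ε (dist (f x) c) with h | h
  · rw [radialPush_of_le hε₀ h] at hx
    have hlt := hHG (f x)
    rw [hx, hGf, dist_zero_left] at hlt
    exact absurd (hfar x h) (not_le.2 (hlt.trans_le (min_le_left _ _)))
  · exact hH _ (dist_radialPush hε₀ (hfc x) h.le) hx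

theorem mem_interior_range_of_injective (f : C(closedBall (0 : E) 1, E)) (hf : Injective f) :
    f ⟨0, by simp⟩ ∈ interior (range f) := by
  have : TietzeExtension E := TietzeExtension.of_tvs ℝ
  obtain ⟨G, hG⟩ := ContinuousMap.exists_extension' (f.continuous.isClosedEmbedding hf)
    (⟨Subtype.val, continuous_subtype_val⟩ : C(closedBall (0 : E) 1, E))
  have hGf : ∀ x, G (f x) = x := congrFun hG
  have hsmall : ∀ᶠ y in 𝓝 (f ⟨0, by simp⟩), ‖G y‖ < 1 / 4 :=
    G.continuous.norm.continuousAt.eventually_lt continuousAt_const (by simp [hGf])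
  obtain ⟨ε, hε, hsmall⟩ := Metric.eventually_nhds_iff.1 hsmall
  refine mem_interior_iff_mem_nhds.2 (mem_of_superset (ball_mem_nhds _ (half_pos hε)) fun c hc ↦ ?_)
  rw [mem_ball'] at hc
  refine mem_range_of_leftInverse f G hGf hc fun y hy ↦ (hsmall ?_).le
  linarith [dist_triangle_right y (f ⟨0, by simp⟩) c]

section NormedSpace

variable {E E' : Type*} [NormedAddCommGroup E] [NormedSpace ℝ E] [FiniteDimensional ℝ E]
  [NormedAddCommGroup E'] [NormedSpace ℝ E']

theorem isOpen_image_of_finrank_eq [FiniteDimensional ℝ E'] (hfin : finrank ℝ E = finrank ℝ E')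
    {U : Set E} (hU : IsOpen U) {f : E → E'} (hf : ContinuousOn f U) (hinj : InjOn f U) :
    IsOpen (f '' U) := by
  rw [isOpen_iff_mem_nhds]
  rintro _ ⟨a, ha, rfl⟩
  let L : E ≃L[ℝ] EuclideanSpace ℝ (Fin (finrank ℝ E)) := toEuclidean
  let L' : E' ≃L[ℝ] EuclideanSpace ℝ (Fin (finrank ℝ E)) :=
    ContinuousLinearEquiv.ofFinrankEq (by rw [finrank_euclideanSpace_fin, hfin])
  have hcont : Continuous fun x ↦ a + L.symm x := by fun_prop
  obtain ⟨r, hr, hrU⟩ := nhds_basis_closedBall.mem_iff.1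
    (hcont.continuousAt.preimage_mem_nhds (x := 0) (hU.mem_nhds (by simpa using ha)))
  let s : closedBall (0 : EuclideanSpace ℝ (Fin (finrank ℝ E))) 1 → E := fun x ↦
    a + L.symm (r • (x : EuclideanSpace ℝ (Fin (finrank ℝ E))))
  have hs : ∀ x, s x ∈ U := fun x ↦ hrU (by
    rw [mem_closedBall_zero_iff, norm_smul, Real.norm_of_nonneg hr.le]
    exact mul_le_of_le_one_right hr.le (mem_closedBall_zero_iff.1 x.2))
  have hs_inj : Injective s := fun x y h ↦
    Subtype.ext (smul_right_injective _ hr.ne' (L.symm.injective (add_left_cancel h)))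
  have hs_cont : Continuous s := by fun_prop
  have hmem := mem_interior_range_of_injective
    ⟨fun x ↦ L' (f (s x)), L'.continuous.comp (hf.comp_continuous hs_cont hs)⟩ fun x y h ↦
      hs_inj (hinj (hs x) (hs y) (L'.injective h))
  have hs₀ : s ⟨0, by simp⟩ = a := by simp [s]
  rw [mem_interior_iff_mem_nhds, ContinuousMap.coe_mk, hs₀] at hmem
  refine mem_of_superset (L'.continuous.continuousAt.preimage_mem_nhds hmem) ?_
  rintro y ⟨x, hx⟩
  exact ⟨s x, hs x, L'.injective hx⟩

variable {M : Type*} [TopologicalSpace M] [ChartedSpace E M] {f : M → E'}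

theorem isOpenMap_of_injective_of_finrank_eq [FiniteDimensional ℝ E']
    (hfin : finrank ℝ E = finrank ℝ E') (hf : Continuous f) (hinj : Injective f) : IsOpenMap f := by
  intro U hU
  rw [isOpen_iff_mem_nhds]
  rintro _ ⟨x, hx, rfl⟩
  let φ := chartAt E x
  have hopen := isOpen_image_of_finrank_eq hfin (φ.isOpen_inter_preimage_symm hU)
    (hf.comp_continuousOn (φ.continuousOn_symm.mono inter_subset_left))
    (hinj.comp_injOn (φ.symm.injOn.mono inter_subset_left))
  refine mem_of_superset (hopen.mem_nhds ⟨φ x, ⟨mem_chart_target E x, ?_⟩, ?_⟩) ?_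
  · rwa [mem_preimage, φ.left_inv (mem_chart_source E x)]
  · rw [comp_apply, φ.left_inv (mem_chart_source E x)]
  · rintro _ ⟨y, hy, rfl⟩
    exact ⟨φ.symm y, hy.2, rfl⟩

theorem finrank_le_of_continuous_injective [FiniteDimensional ℝ E'] [Nonempty M] (hf : Continuous f)
    (hinj : Injective f) : finrank ℝ E ≤ finrank ℝ E' := by
  by_contra! hlt
  let k := finrank ℝ E - finrank ℝ E'
  have : Nonempty (Fin k) := ⟨⟨0, Nat.sub_pos_of_lt hlt⟩⟩
  have hfin : finrank ℝ E = finrank ℝ (E' × (Fin k → ℝ)) := by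
    rw [finrank_prod, finrank_fin_fun, Nat.add_sub_of_le hlt.le]
  have hopen := isOpenMap_of_injective_of_finrank_eq (f := fun x ↦ (f x, (0 : Fin k → ℝ))) hfin
    (by fun_prop) fun x y h ↦ hinj (congrArg Prod.fst h)
  have himage := isOpenMap_snd _ hopen.isOpen_range
  have hconst : Prod.snd '' range (fun x ↦ (f x, (0 : Fin k → ℝ))) = {0} := by
    rw [← range_comp]
    exact range_const
  exact not_isOpen_singleton _ (hconst ▸ himage)

end NormedSpace

end InvarianceOfDomain

section Gluing

variable {A K W Y Z : Type*} [TopologicalSpace A] [TopologicalSpace K] [TopologicalSpace W]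
  [TopologicalSpace Y] [TopologicalSpace Z]

theorem exists_continuousMap_lift {e : A → Y} (he : IsInducing e) (φ : C(W, Y))
    (hφ : ∀ w, φ w ∈ range e) : ∃ τ : C(W, A), ∀ w, e (τ w) = φ w := by
  choose τ hτ using hφ
  exact ⟨⟨τ, he.continuous_iff.2 (by simpa only [comp_def, hτ] using φ.continuous)⟩, hτ⟩

/-- The space `Y` is the union of two closed subspaces, given as the images of closed embeddings.
It describes attaching the space `K` to the space `A`. -/
structure IsClosedCover (i : C(A, Y)) (ψ : C(K, Y)) : Prop where
  isClosedEmbedding_left : IsClosedEmbedding i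
  isClosedEmbedding_right : IsClosedEmbedding ψ
  range_union_range : range i ∪ range ψ = univ

namespace IsClosedCover

variable {i : C(A, Y)} {ψ : C(K, Y)}

theorem subtype {s t : Set Y} (hs : IsClosed s) (ht : IsClosed t) (hst : s ∪ t = univ) :
    IsClosedCover (⟨Subtype.val, continuous_subtype_val⟩ : C(s, Y))
      (⟨Subtype.val, continuous_subtype_val⟩ : C(t, Y)) where
  isClosedEmbedding_left := hs.isClosedEmbedding_subtypeVal
  isClosedEmbedding_right := ht.isClosedEmbedding_subtypeVal
  range_union_range := by simpa using hst

theorem restrictPreimage (h : IsClosedCover i ψ) (U : Set Y) :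
    IsClosedCover (i.restrictPreimage U) (ψ.restrictPreimage U) where
  isClosedEmbedding_left := h.isClosedEmbedding_left.restrictPreimage U
  isClosedEmbedding_right := h.isClosedEmbedding_right.restrictPreimage U
  range_union_range := by
    simp only [ContinuousMap.restrictPreimage, ContinuousMap.coe_mk, range_restrictPreimage,
      ← preimage_union, h.range_union_range, preimage_univ]

theorem induction_on (h : IsClosedCover i ψ) {p : Y → Prop} (hi : ∀ a, p (i a))
    (hψ : ∀ k, p (ψ k)) (y : Y) : p y := by
  obtain ⟨a, rfl⟩ | ⟨k, rfl⟩ := h.range_union_range.symm ▸ mem_univ y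
  exacts [hi a, hψ k]

theorem exists_glue (h : IsClosedCover i ψ) (f : C(A, Z)) (g : C(K, Z))
    (hfg : ∀ a k, i a = ψ k → f a = g k) :
    ∃ F : C(Y, Z), (∀ a, F (i a) = f a) ∧ ∀ k, F (ψ k) = g k := by
  let e : C(A ⊕ K, Y) := ⟨Sum.elim i ψ, by fun_prop⟩
  have he : IsQuotientMap e := by
    refine (h.isClosedEmbedding_left.isClosedMap.sumElim
      h.isClosedEmbedding_right.isClosedMap).isQuotientMap e.continuous ?_
    exact range_eq_univ.1 ((Sum.elim_range i ψ).trans h.range_union_range)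
  have hfac : FactorsThrough (⟨Sum.elim f g, by fun_prop⟩ : C(A ⊕ K, Z)) e := by
    rintro (a | k) (a' | k') hak
    · exact congrArg f (h.isClosedEmbedding_left.injective hak)
    · exact hfg a k' hak
    · exact (hfg a' k hak.symm).symm
    · exact congrArg g (h.isClosedEmbedding_right.injective hak)
  have hlift := DFunLike.congr_fun (he.lift_comp _ hfac)
  exact ⟨he.lift _ hfac, fun a ↦ hlift (Sum.inl a), fun k ↦ hlift (Sum.inr k)⟩

theorem nonempty_homotopyEquiv {E : Type*} [AddCommGroup E] [Module ℝ E] [TopologicalSpace E]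
    [IsTopologicalAddGroup E] [ContinuousSMul ℝ E] {s : Set E} (hs : Convex ℝ s) {ψ : C(s, Y)}
    (h : IsClosedCover i ψ) (r : C(s, s)) (hr : ∀ k, ψ (r k) ∈ range i)
    (hr_fix : ∀ k, ψ k ∈ range i → r k = k) : Nonempty (ContinuousMap.HomotopyEquiv A Y) := by
  obtain ⟨τ, hτ⟩ := exists_continuousMap_lift h.isClosedEmbedding_left.isInducing (ψ.comp r) hr
  have hfix : ∀ a k, i a = ψ k → r k = k := fun a k hak ↦ hr_fix k ⟨a, hak⟩
  obtain ⟨ret, hret_i, hret_ψ⟩ := h.exists_glue (.id A) τ fun a k hak ↦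
    h.isClosedEmbedding_left.injective (by
      rw [ContinuousMap.id_apply, hτ, ContinuousMap.comp_apply, hfix a k hak, hak])
  let line : C(s × unitInterval, s) :=
    ⟨fun p ↦ ⟨AffineMap.lineMap (r p.1 : E) (p.1 : E) (p.2 : ℝ),
      hs.lineMap_mem (r p.1).2 p.1.2 p.2.2⟩, by
      simp only [AffineMap.lineMap_apply_module]; fun_prop⟩
  have hline : ∀ k, r k = k → ∀ t, line (k, t) = k := fun k hk t ↦
    Subtype.ext (by simp [line, hk])
  obtain ⟨H, hH_i, hH_ψ⟩ := h.exists_glue (ContinuousMap.curry (i.comp .fst))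
    (ContinuousMap.curry (ψ.comp line)) fun a k hak ↦ ContinuousMap.ext fun t ↦ by
      simp [hline k (hfix a k hak) t, hak]
  refine ⟨⟨i, ret, ?_, ⟨⟨⟨fun p ↦ H p.2 p.1, by fun_prop⟩, ?_, ?_⟩⟩⟩⟩
  · rw [show ret.comp i = .id A from ContinuousMap.ext hret_i]
  · refine h.induction_on (fun a ↦ ?_) fun k ↦ ?_
    · simp [hH_i, hret_i]
    · simp [hH_ψ, hret_ψ, hτ, line]
  · refine h.induction_on (fun a ↦ ?_) fun k ↦ ?_
    · simp [hH_i]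
    · simp [hH_ψ, line]

end IsClosedCover

end Gluing

section Spheres

variable {E E' : Type*} [NormedAddCommGroup E] [NormedAddCommGroup E'] {A K Y : Type*}
  [TopologicalSpace A] [TopologicalSpace K] [TopologicalSpace Y]

theorem exists_extension_closedBall_of_nullhomotopic [NormedSpace ℝ E] {f : C(sphere (0 : E) 1, Y)}
    (hf : f.Nullhomotopic) :
    ∃ F : C(closedBall (0 : E) 1, Y), ∀ x, F (inclusion sphere_subset_closedBall x) = f x := by
  obtain ⟨y, ⟨H⟩⟩ := hf
  let s : Set (closedBall (0 : E) 1) := {x | 1 / 2 ≤ ‖(x : E)‖}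
  let t : Set (closedBall (0 : E) 1) := {x | ‖(x : E)‖ ≤ 1 / 2}
  have hs₀ : ∀ x : s, ((x : closedBall (0 : E) 1) : E) ≠ 0 := fun x ↦
    norm_pos_iff.1 (one_half_pos.trans_le x.2)
  let push : C(s, sphere (0 : E) 1) :=
    ⟨fun x ↦ ⟨radialPush 0 1 x, dist_radialPush one_pos (hs₀ x) x.1.2⟩,
      (continuousOn_radialPush.comp_continuous (by fun_prop) hs₀).subtype_mk _⟩
  let time : C(s, unitInterval) :=
    ⟨fun x ↦ projIcc 0 1 zero_le_one (2 - 2 * ‖(x : E)‖), by fun_prop⟩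
  have hcover := IsClosedCover.subtype (s := s) (t := t) (isClosed_le (by fun_prop) (by fun_prop))
    (isClosed_le (by fun_prop) (by fun_prop))
    (eq_univ_of_forall fun x ↦ le_total (1 / 2) ‖(x : E)‖)
  obtain ⟨F, hF, -⟩ := hcover.exists_glue (H.toContinuousMap.comp (time.prodMk push)) (.const t y)
    fun a b hab ↦ by
      have ha : ‖((a : closedBall (0 : E) 1) : E)‖ = 1 / 2 :=
        le_antisymm (by rw [show (a : closedBall (0 : E) 1) = b from hab]; exact b.2) a.2
      have htime : time a = 1 := projIcc_of_right_le zero_le_one (by linarith)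
      exact (congrArg (fun τ ↦ H (τ, push a)) htime).trans (H.apply_one _)
  refine ⟨F, fun x ↦ ?_⟩
  let x' : s := ⟨inclusion sphere_subset_closedBall x, by simp [s]; norm_num⟩
  have htime : time x' = 0 := projIcc_of_le_left zero_le_one (by simp [x'])
  have hpush : push x' = x := Subtype.ext (radialPush_of_le one_pos (by simp [x']))
  calc F (inclusion sphere_subset_closedBall x) = H (time x', push x') := hF x'
    _ = f x := by rw [htime, hpush, H.apply_zero]

theorem not_nullhomotopic_of_forall_ne_neg [InnerProductSpace ℝ E] [FiniteDimensional ℝ E]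
    {h : C(sphere (0 : E) 1, sphere (0 : E) 1)} (hne : ∀ x, h x ≠ -x) : ¬ h.Nullhomotopic := by
  intro hnull
  obtain ⟨F, hF⟩ := exists_extension_closedBall_of_nullhomotopic hnull
  obtain ⟨x, hx⟩ := exists_fixedPoint_closedBall
    ⟨fun x ↦ inclusion sphere_subset_closedBall (-F x), by fun_prop⟩
  rw [ContinuousMap.coe_mk] at hx
  refine hne (-F x) ?_
  rw [neg_neg, ← hF, hx]

section SphereExtension

variable [NormedSpace ℝ E] [FiniteDimensional ℝ E] [NormedSpace ℝ E'] [FiniteDimensional ℝ E']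

theorem exists_continuousMap_ne_zero_of_finrank_lt (hfin : finrank ℝ E < finrank ℝ E')
    (g : C(E, E')) : ∃ G : C(E, E'), (∀ x, G x ≠ 0) ∧ ∀ x, 1 ≤ ‖g x‖ → G x = g x := by
  obtain ⟨Q, hQg, hQ⟩ := exists_continuousMap_near_ne_zero (N := univ) (fun P hP ↦ by
    rw [image_univ]; exact hP.dense_compl_range_of_finrank_lt_finrank hfin) g one_half_pos
  let χ : C(E, unitInterval) := ⟨fun x ↦ projIcc 0 1 zero_le_one (2 - 2 * ‖g x‖), by fun_prop⟩
  let G : C(E, E') := ⟨fun x ↦ AffineMap.lineMap (g x) (Q x) (χ x : ℝ), by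
    simp only [AffineMap.lineMap_apply_module]; fun_prop⟩
  refine ⟨G, fun x hx ↦ ?_, fun x hx ↦ ?_⟩
  · rcases le_or_gt ‖g x‖ (1 / 2) with hgx | hgx
    · have hχ : χ x = 1 := projIcc_of_right_le zero_le_one (by linarith)
      exact hQ x (mem_univ x) (by simpa [G, hχ] using hx)
    · have hdist : ‖g x‖ ≤ dist (g x) (Q x) := by
        calc ‖g x‖ = dist (G x) (g x) := by rw [hx, dist_zero_left]
          _ = ‖(χ x : ℝ)‖ * dist (g x) (Q x) := dist_lineMap_left _ _ _
          _ ≤ dist (g x) (Q x) := mul_le_of_le_one_left dist_nonneg (by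
            rw [Real.norm_of_nonneg (χ x).2.1]; exact (χ x).2.2)
      linarith [dist_comm (g x) (Q x), hQg x]
  · have hχ : χ x = 0 := projIcc_of_le_left zero_le_one (by linarith)
    simp [G, hχ]

theorem exists_extension_sphere_of_finrank_lt (hfin : finrank ℝ E < finrank ℝ E') {e : A → E}
    (he : IsClosedEmbedding e) (f : C(A, sphere (0 : E') 1)) :
    ∃ F : C(E, sphere (0 : E') 1), ∀ a, F (e a) = f a := by
  have : TietzeExtension E' := TietzeExtension.of_tvs ℝ
  obtain ⟨g, hg⟩ := ContinuousMap.exists_extension' he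
    (⟨fun a ↦ (f a : E'), by fun_prop⟩ : C(A, E'))
  obtain ⟨G, hG₀, hG⟩ := exists_continuousMap_ne_zero_of_finrank_lt hfin g
  refine ⟨⟨fun x ↦ (homeomorphUnitSphereProd E' ⟨G x, hG₀ x⟩).1, by fun_prop⟩, fun a ↦ ?_⟩
  have hga : g (e a) = f a := congrFun hg a
  have hGa : G (e a) = f a := (hG _ (by simp [hga])).trans hga
  exact Subtype.ext (by simp [hGa])

theorem IsClosedCover.exists_extension_sphere {i : C(A, Y)} {ψ : C(K, Y)} (h : IsClosedCover i ψ)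
    {c : K → E} (hc : IsClosedEmbedding c) (hfin : finrank ℝ E < finrank ℝ E')
    (f : C(A, sphere (0 : E') 1)) : ∃ F : C(Y, sphere (0 : E') 1), F.comp i = f := by
  have hclosed : IsClosed (ψ ⁻¹' range i) :=
    h.isClosedEmbedding_left.isClosed_range.preimage ψ.continuous
  obtain ⟨τ, hτ⟩ := exists_continuousMap_lift h.isClosedEmbedding_left.isInducing
    (ψ.restrict (ψ ⁻¹' range i)) fun w ↦ w.2
  obtain ⟨G, hG⟩ := exists_extension_sphere_of_finrank_lt hfin
    (hc.comp hclosed.isClosedEmbedding_subtypeVal) (f.comp τ)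
  obtain ⟨F, hF, -⟩ := h.exists_glue f (G.comp ⟨c, hc.continuous⟩) fun a k hak ↦ by
    have hk : i (τ ⟨k, a, hak⟩) = i a := (hτ _).trans hak.symm
    have hGk := hG ⟨k, a, hak⟩
    rw [ContinuousMap.comp_apply, h.isClosedEmbedding_left.injective hk] at hGk
    exact hGk.symm
  exact ⟨F, ContinuousMap.ext hF⟩

end SphereExtension

end Spheres

section Retraction

variable {E : Type*} [NormedAddCommGroup E] [InnerProductSpace ℝ E]

theorem tietzeExtension_compl_singleton_sphere [FiniteDimensional ℝ E] (v : sphere (0 : E) 1) :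
    TietzeExtension ({v}ᶜ : Set (sphere (0 : E) 1)) := by
  have hv : ‖(v : E)‖ = 1 := mem_sphere_zero_iff_norm.1 v.2
  have : TietzeExtension (ℝ ∙ (v : E))ᗮ := TietzeExtension.of_tvs ℝ
  exact TietzeExtension.of_homeo (((Homeomorph.setCongr (stereographic_source hv).symm).trans
    (stereographic hv).toHomeomorphSourceTarget).trans
      ((Homeomorph.setCongr (stereographic_target hv)).trans (Homeomorph.Set.univ _)))

theorem IsClosedCover.exists_retraction_compl_singleton {A Y E : Type*} [TopologicalSpace A]
    [TopologicalSpace Y] [NormedAddCommGroup E] [NormedSpace ℝ E] {i : C(A, Y)}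
    {ψ : C(closedBall (0 : E) 1, Y)} (h : IsClosedCover i ψ)
    (hψ : ∀ x, ψ x ∈ range i ↔ ‖(x : E)‖ = 1) :
    ∃ ρ : C(({ψ ⟨0, by simp⟩}ᶜ : Set Y), A),
      ∀ (y : ({ψ ⟨0, by simp⟩}ᶜ : Set Y)) (a : A), i a = y → ρ y = a := by
  let U : Set Y := {ψ ⟨0, by simp⟩}ᶜ
  have hne : ∀ x : ψ ⁻¹' U, ((x : closedBall (0 : E) 1) : E) ≠ 0 := fun x hx ↦
    x.2 (congrArg ψ (Subtype.ext hx))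
  let push : C(ψ ⁻¹' U, closedBall (0 : E) 1) :=
    ⟨fun x ↦ ⟨radialPush 0 1 x, (dist_radialPush one_pos (hne x) x.1.2).le⟩,
      (continuousOn_radialPush.comp_continuous (by fun_prop) hne).subtype_mk _⟩
  obtain ⟨τ, hτ⟩ := exists_continuousMap_lift h.isClosedEmbedding_left.isInducing (ψ.comp push)
    fun x ↦ (hψ _).2 (mem_sphere_zero_iff_norm.1 (dist_radialPush one_pos (hne x) x.1.2))
  have hcompat : ∀ a x, i.restrictPreimage U a = ψ.restrictPreimage U x → (a : A) = τ x := by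
    intro a x hax
    replace hax : i a = ψ x := congrArg Subtype.val hax
    have hpush : push x = x := Subtype.ext (radialPush_of_le one_pos (by
      rw [dist_zero_right, (hψ x).1 ⟨a, hax⟩]))
    apply h.isClosedEmbedding_left.injective
    rw [hτ, ContinuousMap.comp_apply, hpush, hax]
  obtain ⟨ρ, hρ, -⟩ := (h.restrictPreimage U).exists_glue ⟨Subtype.val, continuous_subtype_val⟩ τ
    hcompat
  refine ⟨ρ, ?_⟩
  rintro ⟨_, hy⟩ a rfl
  exact hρ ⟨a, hy⟩

theorem exists_retraction_closedBall_of_cell {E₀ : Type*} [FiniteDimensional ℝ E]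
    [NormedAddCommGroup E₀] [NormedSpace ℝ E₀] {A : Set (sphere (0 : E) 1)} (hA : IsClosed A)
    (σ : C(closedBall (0 : E₀) 1, sphere (0 : E) 1)) (hσ : IsClosedEmbedding σ)
    (hcover : A ∪ range σ = univ) (hAσ : ∀ x, σ x ∈ A ↔ ‖(x : E₀)‖ = 1) :
    ∃ r : C(closedBall (0 : E) 1, A), ∀ a : A, r (inclusion sphere_subset_closedBall a) = a := by
  have hA_range : range (⟨Subtype.val, continuous_subtype_val⟩ : C(A, sphere (0 : E) 1)) = A :=
    Subtype.range_val
  have h : IsClosedCover ⟨Subtype.val, continuous_subtype_val⟩ σ :=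
    ⟨hA.isClosedEmbedding_subtypeVal, hσ, by rwa [hA_range]⟩
  obtain ⟨ρ, hρ⟩ := h.exists_retraction_compl_singleton (by simpa only [hA_range] using hAσ)
  let v : sphere (0 : E) 1 := σ ⟨0, by simp⟩
  have hv : ∀ a : A, (a : sphere (0 : E) 1) ∈ ({v}ᶜ : Set (sphere (0 : E) 1)) := by
    intro a ha
    simpa using (hAσ ⟨0, by simp⟩).1 (ha ▸ a.2)
  have := tietzeExtension_compl_singleton_sphere v
  have : CompactSpace A := isCompact_iff_compactSpace.1 hA.isCompact
  have hemb : IsClosedEmbedding fun a : A ↦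
      inclusion sphere_subset_closedBall (a : sphere (0 : E) 1) :=
    Continuous.isClosedEmbedding (by fun_prop)
      ((inclusion_injective sphere_subset_closedBall).comp Subtype.val_injective)
  obtain ⟨e, he⟩ := ContinuousMap.exists_extension' hemb
    (⟨fun a ↦ ⟨a, hv a⟩, by fun_prop⟩ : C(A, ({v}ᶜ : Set (sphere (0 : E) 1))))
  exact ⟨ρ.comp e, fun a ↦ hρ _ a (congrArg Subtype.val (congrFun he a)).symm⟩

end Retraction

section Pinch

variable {E : Type*} [NormedAddCommGroup E]

variable (E) in
/-- The lowest point of the unit sphere of `E × ℝ`. -/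
noncomputable def southPole : sphere (0 : WithLp 2 (E × ℝ)) 1 :=
  ⟨WithLp.toLp 2 (0, -1), by simp⟩

theorem southPole_ne_neg {x : sphere (0 : WithLp 2 (E × ℝ)) 1}
    (hx : (x : WithLp 2 (E × ℝ)).snd ≤ 0) : southPole E ≠ -x := by
  intro h
  have hsnd : (-1 : ℝ) = -(x : WithLp 2 (E × ℝ)).snd :=
    congrArg (fun y : sphere (0 : WithLp 2 (E × ℝ)) 1 ↦ y.1.snd) h
  linarith

variable (E) in
/-- The vertical projection of the unit sphere of `E × ℝ` onto its equatorial ball. -/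
noncomputable def equatorialProj : C(sphere (0 : WithLp 2 (E × ℝ)) 1, closedBall (0 : E) 1) where
  toFun x := ⟨(x : WithLp 2 (E × ℝ)).fst, mem_closedBall_zero_iff.2 <|
    (WithLp.norm_fst_le _ (x : WithLp 2 (E × ℝ))).trans_eq (mem_sphere_zero_iff_norm.1 x.2)⟩
  continuous_toFun := by fun_prop

theorem norm_equatorialProj_of_snd_eq_zero {x : sphere (0 : WithLp 2 (E × ℝ)) 1}
    (hx : (x : WithLp 2 (E × ℝ)).snd = 0) : ‖(equatorialProj E x : E)‖ = 1 := by
  have h := mem_sphere_zero_iff_norm.1 x.2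
  rwa [WithLp.prod_norm_eq_of_L2, hx, norm_zero, zero_pow two_ne_zero, add_zero,
    Real.sqrt_sq (norm_nonneg _)] at h

theorem exists_glue_hemispheres {Y : Type*} [TopologicalSpace Y] (φ k : C(closedBall (0 : E) 1, Y))
    (hφk : ∀ u : closedBall (0 : E) 1, ‖(u : E)‖ = 1 → φ u = k u) :
    ∃ s : C(sphere (0 : WithLp 2 (E × ℝ)) 1, Y), ∀ x : sphere (0 : WithLp 2 (E × ℝ)) 1,
      0 ≤ (x : WithLp 2 (E × ℝ)).snd ∧ s x = φ (equatorialProj E x) ∨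
        (x : WithLp 2 (E × ℝ)).snd ≤ 0 ∧ s x = k (equatorialProj E x) := by
  classical
  refine ⟨⟨fun x ↦ if 0 ≤ (x : WithLp 2 (E × ℝ)).snd then φ (equatorialProj E x)
    else k (equatorialProj E x), Continuous.if_le (by fun_prop) (by fun_prop) (by fun_prop)
      (by fun_prop) fun x hx ↦ hφk _ (norm_equatorialProj_of_snd_eq_zero hx.symm)⟩, fun x ↦ ?_⟩
  by_cases hx : 0 ≤ (x : WithLp 2 (E × ℝ)).snd
  · exact .inl ⟨hx, if_pos hx⟩
  · exact .inr ⟨(not_le.1 hx).le, if_neg hx⟩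

variable [NormedSpace ℝ E]

variable (E) in
/-- The map from the unit ball onto the unit sphere of `E × ℝ` collapsing the boundary to the south
pole, which presents the sphere as a disk modulo its boundary. -/
noncomputable def pinchBoundary : C(closedBall (0 : E) 1, sphere (0 : WithLp 2 (E × ℝ)) 1) where
  toFun u := ⟨WithLp.toLp 2 ((2 * √(1 - ‖(u : E)‖ ^ 2)) • (u : E), 1 - 2 * ‖(u : E)‖ ^ 2), by
    have hu : ‖(u : E)‖ ^ 2 ≤ 1 := pow_le_one₀ (norm_nonneg _) (mem_closedBall_zero_iff.1 u.2)
    rw [mem_sphere_zero_iff_norm, WithLp.prod_norm_eq_of_L2, Real.sqrt_eq_one]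
    simp only [WithLp.toLp_fst, WithLp.toLp_snd, norm_smul, norm_mul, mul_pow, Real.norm_eq_abs,
      sq_abs, Real.sq_sqrt (sub_nonneg.2 hu)]
    ring⟩
  continuous_toFun := by fun_prop

theorem pinchBoundary_eq_southPole {u : closedBall (0 : E) 1} (hu : ‖(u : E)‖ = 1) :
    pinchBoundary E u = southPole E := by
  ext1
  simp only [pinchBoundary, southPole, ContinuousMap.coe_mk, hu]
  norm_num

theorem pinchBoundary_equatorialProj_ne_neg {x : sphere (0 : WithLp 2 (E × ℝ)) 1}
    (hx : 0 ≤ (x : WithLp 2 (E × ℝ)).snd) : pinchBoundary E (equatorialProj E x) ≠ -x := by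
  intro h
  set u : E := (x : WithLp 2 (E × ℝ)).fst
  have hfst : (2 * √(1 - ‖u‖ ^ 2)) • u = -u :=
    congrArg (fun y : sphere (0 : WithLp 2 (E × ℝ)) 1 ↦ y.1.fst) h
  have hsnd : 1 - 2 * ‖u‖ ^ 2 = -(x : WithLp 2 (E × ℝ)).snd :=
    congrArg (fun y : sphere (0 : WithLp 2 (E × ℝ)) 1 ↦ y.1.snd) h
  have hu₀ : u = 0 := by
    have hsmul : (2 * √(1 - ‖u‖ ^ 2) + 1) • u = 0 := by
      rw [add_smul, one_smul, hfst, neg_add_cancel]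
    exact (smul_eq_zero.1 hsmul).resolve_left (by positivity)
  rw [hu₀, norm_zero] at hsnd
  linarith

theorem IsClosedCover.exists_not_nullhomotopic {E : Type*} [NormedAddCommGroup E]
    [InnerProductSpace ℝ E] [FiniteDimensional ℝ E] {A Y : Type*}
    [TopologicalSpace A] [ContractibleSpace A] [TopologicalSpace Y] {i : C(A, Y)}
    {ψ : C(closedBall (0 : E) 1, Y)} (h : IsClosedCover i ψ)
    (hψ : ∀ x, ψ x ∈ range i ↔ ‖(x : E)‖ = 1) :
    ∃ q : C(Y, sphere (0 : WithLp 2 (E × ℝ)) 1), ¬ q.Nullhomotopic := by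
  obtain ⟨q, hqi, hqψ⟩ := h.exists_glue (.const A (southPole E)) (pinchBoundary E)
    fun a x hax ↦ (pinchBoundary_eq_southPole ((hψ x).1 ⟨a, hax⟩)).symm
  obtain ⟨τ, hτ⟩ := exists_continuousMap_lift h.isClosedEmbedding_left.isInducing
    (ψ.comp (.inclusion sphere_subset_closedBall)) fun x ↦ (hψ _).2 (mem_sphere_zero_iff_norm.1 x.2)
  obtain ⟨k, hk⟩ := exists_extension_closedBall_of_nullhomotopic
    (show τ.Nullhomotopic from (id_nullhomotopic A).comp_left τ)
  obtain ⟨s, hs⟩ := exists_glue_hemispheres ψ (i.comp k) fun u hu ↦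
    ((congrArg i (hk ⟨u, by simpa using hu⟩)).trans (hτ _)).symm
  refine ⟨q, fun hq ↦ not_nullhomotopic_of_forall_ne_neg (fun x ↦ ?_) (hq.comp_left s)⟩
  rw [ContinuousMap.comp_apply]
  obtain ⟨hx, hsx⟩ | ⟨hx, hsx⟩ := hs x
  · rw [hsx, hqψ]
    exact pinchBoundary_equatorialProj_ne_neg hx
  · rw [hsx, ContinuousMap.comp_apply, hqi]
    exact southPole_ne_neg hx

end Pinch

section Frontier

namespace RegularCW

variable {F X : Type} [Fintype F] [TopologicalSpace X] (C : RegularCW F X) {f g h : F} {x : X}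

/-- The open cell of the face `f`. -/
def openCell (f : F) : Set X :=
  C.charMap f '' {u | ‖(u : EuclideanSpace ℝ (Fin (C.dim f)))‖ < 1}

/-- The attaching map of the face `f`: the restriction of its characteristic map to the boundary
sphere. -/
def attachingMap (f : F) : C(sphere (0 : EuclideanSpace ℝ (Fin (C.dim f))) 1, X) :=
  ⟨fun w ↦ C.charMap f (inclusion sphere_subset_closedBall w),
    (C.continuous_charMap f).comp (continuous_inclusion sphere_subset_closedBall)⟩

variable {C}

theorem openCell_subset_cell : C.openCell f ⊆ C.cell f :=
  image_subset_range _ _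

theorem range_attachingMap_subset_cell : range (C.attachingMap f) ⊆ C.cell f :=
  range_subset_iff.2 fun _ ↦ mem_range_self _

theorem mem_cell_iff : x ∈ C.cell f ↔ x ∈ C.openCell f ∨ x ∈ range (C.attachingMap f) := by
  refine ⟨?_, fun hx ↦ hx.elim (openCell_subset_cell ·) (range_attachingMap_subset_cell ·)⟩
  rintro ⟨u, rfl⟩
  obtain hu | hu := (mem_closedBall_zero_iff.1 u.2).lt_or_eq
  · exact .inl ⟨u, hu, rfl⟩
  · exact .inr ⟨⟨u, mem_sphere_zero_iff_norm.2 hu⟩, rfl⟩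

theorem eq_of_mem_openCell (hf : x ∈ C.openCell f) (hg : x ∈ C.openCell g) : f = g := by
  by_contra hfg
  exact disjoint_left.1 (C.disjoint_openCells f g hfg) hf hg

theorem exists_cell_of_mem_range_attachingMap (hx : x ∈ range (C.attachingMap f)) :
    ∃ g, C.dim g < C.dim f ∧ x ∈ C.cell g := by
  obtain ⟨w, rfl⟩ := hx
  have w_norm : ‖(w : EuclideanSpace ℝ (Fin (C.dim f)))‖ = 1 := mem_sphere_zero_iff_norm.1 w.2
  obtain ⟨g, hg, hwg⟩ := mem_iUnion₂.1
    (C.boundary f ⟨inclusion sphere_subset_closedBall w, w_norm, rfl⟩)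
  exact ⟨g, hg, hwg⟩

theorem exists_openCell_of_mem_cell (hx : x ∈ C.cell f) :
    ∃ g, x ∈ C.openCell g ∧ (g = f ∨ C.dim g < C.dim f) := by
  induction hn : C.dim f using Nat.strong_induction_on generalizing f with
  | _ n ih =>
    subst hn
    obtain hx | hx := mem_cell_iff.1 hx
    · exact ⟨f, hx, .inl rfl⟩
    · obtain ⟨g, hgf, hxg⟩ := exists_cell_of_mem_range_attachingMap hx
      obtain ⟨k, hxk, rfl | hkg⟩ := ih _ hgf hxg rfl
      exacts [⟨k, hxk, .inr hgf⟩, ⟨k, hxk, .inr (hkg.trans hgf)⟩]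

theorem exists_mem_openCell (C : RegularCW F X) (x : X) : ∃ f, x ∈ C.openCell f := by
  obtain ⟨f, hf⟩ := mem_iUnion.1 (C.cover.ge trivial : x ∈ _)
  obtain ⟨g, hg, -⟩ := exists_openCell_of_mem_cell hf
  exact ⟨g, hg⟩

theorem eq_or_dim_lt_of_mem_openCell_of_mem_cell (hg : x ∈ C.openCell g) (hf : x ∈ C.cell f) :
    g = f ∨ C.dim g < C.dim f := by
  obtain ⟨k, hk, hkf⟩ := exists_openCell_of_mem_cell hf
  rwa [eq_of_mem_openCell hg hk]

theorem dim_lt_of_mem_openCell_of_mem_range_attachingMap (hg : x ∈ C.openCell g)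
    (hf : x ∈ range (C.attachingMap f)) : C.dim g < C.dim f := by
  obtain ⟨k, hkf, hk⟩ := exists_cell_of_mem_range_attachingMap hf
  obtain rfl | hgk := eq_or_dim_lt_of_mem_openCell_of_mem_cell hg hk
  exacts [hkf, hgk.trans hkf]

theorem charMap_mem_openCell_iff {u : closedBall (0 : EuclideanSpace ℝ (Fin (C.dim f))) 1} :
    C.charMap f u ∈ C.openCell f ↔ ‖(u : EuclideanSpace ℝ (Fin (C.dim f)))‖ < 1 :=
  (C.injective_charMap f).mem_set_image

theorem dense_norm_lt_one {E : Type*} [NormedAddCommGroup E] [NormedSpace ℝ E] :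
    Dense {u : closedBall (0 : E) 1 | ‖(u : E)‖ < 1} := by
  refine Subtype.dense_iff.2 <| (closure_ball (0 : E) one_ne_zero).ge.trans <|
    closure_mono fun u hu ↦ ?_
  rw [mem_ball_zero_iff] at hu
  exact ⟨⟨u, mem_closedBall_zero_iff.2 hu.le⟩, hu, rfl⟩

theorem cell_subset_of_openCell_subset {s : Set X} (hs : IsClosed s) (hf : C.openCell f ⊆ s) :
    C.cell f ⊆ s :=
  range_subset_iff.2 fun u ↦
    (hs.preimage (C.continuous_charMap f)).closure_subset_iff.2 (image_subset_iff.1 hf)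
      (dense_norm_lt_one u)

variable (C) in
/-- The closed cells of dimension at most `dim g` other than that of `g`. In the skeleton of
dimension `dim g` this is the complement of the open cell of `g`. -/
def otherCells (g : F) : Set X :=
  ⋃ k ∈ {k | k ≠ g ∧ C.dim k ≤ C.dim g}, C.cell k

theorem mem_openCell_iff_notMem_otherCells (hx : x ∈ C.openCell h) (hh : C.dim h ≤ C.dim g) :
    x ∈ C.openCell g ↔ x ∉ C.otherCells g := by
  refine ⟨fun hxg hxo ↦ ?_, fun hxo ↦ ?_⟩
  · obtain ⟨k, ⟨hkg, hk⟩, hxk⟩ := mem_iUnion₂.1 hxo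
    obtain rfl | hgk := eq_or_dim_lt_of_mem_openCell_of_mem_cell hxg hxk
    exacts [hkg rfl, hk.not_gt hgk]
  · obtain rfl | hhg := eq_or_ne h g
    · exact hx
    · exact absurd (mem_iUnion₂.2 ⟨h, ⟨hhg, hh⟩, openCell_subset_cell hx⟩) hxo

theorem isOpenMap_of_attachingMap_lift {U : Set (sphere (0 : EuclideanSpace ℝ (Fin (C.dim f))) 1)}
    (hU : IsOpen U) (hdim : C.dim f = C.dim g + 1)
    {τ : C(U, closedBall (0 : EuclideanSpace ℝ (Fin (C.dim g))) 1)} (hτ : Injective τ) :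
    IsOpenMap fun w ↦ (τ w : EuclideanSpace ℝ (Fin (C.dim g))) := by
  have : Fact (finrank ℝ (EuclideanSpace ℝ (Fin (C.dim f))) = C.dim g + 1) := ⟨by simp [hdim]⟩
  exact isOpenMap_of_injective_of_finrank_eq (E := EuclideanSpace ℝ (Fin (C.dim g)))
    (M := (⟨U, hU⟩ : TopologicalSpace.Opens _)) rfl (continuous_subtype_val.comp τ.continuous)
    (Subtype.val_injective.comp hτ)

variable [T2Space X]

theorem isClosedEmbedding_charMap : IsClosedEmbedding (C.charMap f) :=
  (C.continuous_charMap f).isClosedEmbedding (C.injective_charMap f)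

theorem isClosed_cell : IsClosed (C.cell f) :=
  isClosedEmbedding_charMap.isClosed_range

theorem isClosed_otherCells : IsClosed (C.otherCells g) :=
  (toFinite _).isClosed_biUnion fun _ _ ↦ isClosed_cell

theorem exists_injective_lift_of_attachingMap_mem_cell
    {U : Set (sphere (0 : EuclideanSpace ℝ (Fin (C.dim f))) 1)}
    (hU : ∀ w ∈ U, C.attachingMap f w ∈ C.cell g) :
    ∃ τ : C(U, closedBall (0 : EuclideanSpace ℝ (Fin (C.dim g))) 1), Injective τ ∧
      ∀ w : U, C.charMap g (τ w) = C.attachingMap f w := by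
  obtain ⟨τ, hτ⟩ := exists_continuousMap_lift (isClosedEmbedding_charMap (f := g)).isInducing
    ((C.attachingMap f).restrict U) fun w ↦ hU w w.2
  refine ⟨τ, fun w w' hww' ↦ ?_, hτ⟩
  have h : C.attachingMap f w = C.attachingMap f w' :=
    (hτ w).symm.trans ((congrArg _ hww').trans (hτ w'))
  exact Subtype.ext (inclusion_injective sphere_subset_closedBall (C.injective_charMap f h))

theorem dim_le_dim_add_one_of_attachingMap_mem_cell
    {U : Set (sphere (0 : EuclideanSpace ℝ (Fin (C.dim f))) 1)} (hU : IsOpen U) (hne : U.Nonempty)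
    (hUg : ∀ w ∈ U, C.attachingMap f w ∈ C.cell g) : C.dim f ≤ C.dim g + 1 := by
  obtain ⟨τ, hτ, -⟩ := exists_injective_lift_of_attachingMap_mem_cell hUg
  cases hn : C.dim f with
  | zero => exact Nat.zero_le _
  | succ n =>
    have : Fact (finrank ℝ (EuclideanSpace ℝ (Fin (C.dim f))) = n + 1) := ⟨by simp [hn]⟩
    have : Nonempty (⟨U, hU⟩ : TopologicalSpace.Opens _) := hne.to_subtype
    have hle := finrank_le_of_continuous_injective (E := EuclideanSpace ℝ (Fin n))
      (M := (⟨U, hU⟩ : TopologicalSpace.Opens _)) (continuous_subtype_val.comp τ.continuous)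
      (Subtype.val_injective.comp hτ)
    simpa using hle

theorem cell_subset_cell_of_dim_add_one_eq (hdim : C.dim f = C.dim g + 1) (hg : x ∈ C.openCell g)
    (hf : x ∈ C.cell f) : C.cell g ⊆ C.cell f := by
  let U : Set (sphere (0 : EuclideanSpace ℝ (Fin (C.dim f))) 1) :=
    C.attachingMap f ⁻¹' C.openCell g
  have hUo : U = C.attachingMap f ⁻¹' (C.otherCells g)ᶜ := by
    ext w
    obtain ⟨k, hk⟩ := C.exists_mem_openCell (C.attachingMap f w)
    have hkf := dim_lt_of_mem_openCell_of_mem_range_attachingMap hk (mem_range_self w)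
    exact mem_openCell_iff_notMem_otherCells hk (by lia)
  have hU : IsOpen U :=
    hUo ▸ isClosed_otherCells.isOpen_compl.preimage (C.attachingMap f).continuous
  obtain ⟨τ, hτ_inj, hτ⟩ := exists_injective_lift_of_attachingMap_mem_cell (U := U)
    fun w hw ↦ openCell_subset_cell hw
  have hrange : range (fun w ↦ (τ w : EuclideanSpace ℝ (Fin (C.dim g)))) =
      ball 0 1 ∩ (↑) '' (C.charMap g ⁻¹' C.cell f) := by
    refine Subset.antisymm (range_subset_iff.2 fun w ↦ ⟨?_, τ w, ?_, rfl⟩) ?_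
    · exact mem_ball_zero_iff.2 (charMap_mem_openCell_iff.1 ((hτ w).symm ▸ w.2))
    · exact mem_preimage.2 ((hτ w).symm ▸ range_attachingMap_subset_cell (mem_range_self _))
    · rintro _ ⟨hu, u, huf, rfl⟩
      have hug := charMap_mem_openCell_iff.2 (mem_ball_zero_iff.1 hu)
      obtain huo | ⟨w, hw⟩ := mem_cell_iff.1 huf
      · exact absurd (eq_of_mem_openCell hug huo) (by rintro rfl; lia)
      · refine ⟨⟨w, mem_preimage.2 (hw.symm ▸ hug)⟩, congrArg _ (C.injective_charMap g ?_)⟩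
        rw [hτ, hw]
  have hclosed : IsClosed
      ((↑) '' (C.charMap g ⁻¹' C.cell f) : Set (EuclideanSpace ℝ (Fin (C.dim g)))) :=
    isClosed_closedBall.isClosedEmbedding_subtypeVal.isClosedMap _
      (isClosed_cell.preimage (C.continuous_charMap g))
  have hball : ball (0 : EuclideanSpace ℝ (Fin (C.dim g))) 1 ⊆
      (↑) '' (C.charMap g ⁻¹' C.cell f) := by
    obtain ⟨u, hu, rfl⟩ := hg
    have hopen := (isOpenMap_of_attachingMap_lift hU hdim hτ_inj).isOpen_range
    rw [hrange] at hopen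
    refine ((convex_ball 0 1).isPreconnected.subset_of_closure_inter_subset hopen
      ⟨u, mem_ball_zero_iff.2 hu, mem_ball_zero_iff.2 hu, u, hf, rfl⟩ ?_).trans inter_subset_right
    exact fun y hy ↦ ⟨hy.2, closure_minimal inter_subset_right hclosed hy.1⟩
  refine cell_subset_of_openCell_subset isClosed_cell ?_
  rintro _ ⟨u, hu, rfl⟩
  exact (Subtype.val_injective.mem_set_image).1 (hball (mem_ball_zero_iff.2 hu))

theorem exists_codim_one_openCell_of_isOpen
    {U : Set (sphere (0 : EuclideanSpace ℝ (Fin (C.dim f))) 1)} (hU : IsOpen U)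
    (hne : U.Nonempty) :
    ∃ w ∈ U, ∃ g, C.attachingMap f w ∈ C.openCell g ∧ C.dim f = C.dim g + 1 := by
  classical
  -- A cell of maximal dimension among those meeting `U` has relatively open trace in `U`.
  obtain ⟨g, hg, hmax⟩ := (Finset.univ.filter
    fun g ↦ ∃ w ∈ U, C.attachingMap f w ∈ C.openCell g).exists_max_image C.dim <| by
      obtain ⟨w, hw⟩ := hne
      obtain ⟨g, hg⟩ := C.exists_mem_openCell (C.attachingMap f w)
      exact ⟨g, Finset.mem_filter_univ _ |>.2 ⟨w, hw, hg⟩⟩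
  simp only [Finset.mem_filter_univ, forall_exists_index, and_imp] at hg hmax
  obtain ⟨w, hw, hwg⟩ := hg
  have hcell : ∀ w ∈ U, C.attachingMap f w ∈ C.openCell g ↔
      C.attachingMap f w ∉ C.otherCells g := fun w hw ↦ by
    obtain ⟨k, hk⟩ := C.exists_mem_openCell (C.attachingMap f w)
    exact mem_openCell_iff_notMem_otherCells hk (hmax k w hw hk)
  have hle : C.dim f ≤ C.dim g + 1 := dim_le_dim_add_one_of_attachingMap_mem_cell
    (hU.inter (isClosed_otherCells.isOpen_compl.preimage (C.attachingMap f).continuous))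
    ⟨w, hw, (hcell w hw).1 hwg⟩ fun w' hw' ↦ openCell_subset_cell ((hcell w' hw'.1).2 hw'.2)
  have hlt := dim_lt_of_mem_openCell_of_mem_range_attachingMap hwg (mem_range_self w)
  exact ⟨w, hw, g, hwg, by lia⟩

theorem exists_facet_of_mem_range_attachingMap (hx : x ∈ range (C.attachingMap f)) :
    ∃ g, C.dim f = C.dim g + 1 ∧ C.cell g ⊆ C.cell f ∧ x ∈ C.cell g := by
  let s : Set X := ⋃ g ∈ {g | C.dim f = C.dim g + 1 ∧ C.cell g ⊆ C.cell f}, C.cell g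
  have hs : IsClosed s := (toFinite _).isClosed_biUnion fun _ _ ↦ isClosed_cell
  suffices hxs : x ∈ s by
    obtain ⟨g, ⟨hdim, hgf⟩, hxg⟩ := mem_iUnion₂.1 hxs
    exact ⟨g, hdim, hgf, hxg⟩
  by_contra hxs
  obtain ⟨w₀, rfl⟩ := hx
  obtain ⟨w, hw, g, hwg, hdim⟩ := exists_codim_one_openCell_of_isOpen
    (hs.isOpen_compl.preimage (C.attachingMap f).continuous) ⟨w₀, hxs⟩
  have hgf := cell_subset_cell_of_dim_add_one_eq hdim hwg
    (range_attachingMap_subset_cell (mem_range_self w))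
  exact hw (mem_iUnion₂.2 ⟨g, ⟨hdim, hgf⟩, openCell_subset_cell hwg⟩)

theorem cell_subset_cell_of_mem_openCell (hg : x ∈ C.openCell g) (hf : x ∈ C.cell f) :
    C.cell g ⊆ C.cell f := by
  induction hn : C.dim f using Nat.strong_induction_on generalizing f with
  | _ n ih =>
    subst hn
    obtain hxf | hxf := mem_cell_iff.1 hf
    · rw [eq_of_mem_openCell hg hxf]
    · obtain ⟨k, hdim, hkf, hxk⟩ := exists_facet_of_mem_range_attachingMap hxf
      exact (ih _ (by lia) hxk rfl).trans hkf

variable {D : Finset F}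

theorem Subcomplex.mem_real_iff (hD : C.Subcomplex D) (hx : x ∈ C.openCell g) :
    x ∈ C.real D ↔ g ∈ D := by
  refine ⟨fun hxD ↦ ?_, fun hg ↦ mem_biUnion hg (openCell_subset_cell hx)⟩
  obtain ⟨f, hf, hxf⟩ := mem_iUnion₂.1 hxD
  exact hD g f (cell_subset_cell_of_mem_openCell hx hxf) hf

theorem isClosed_real : IsClosed (C.real D) :=
  D.finite_toSet.isClosed_biUnion fun _ _ ↦ isClosed_cell

end RegularCW

end Frontier

section Attaching

namespace RegularCW

variable {F X : Type} [Fintype F] [TopologicalSpace X] {C : RegularCW F X} {D D' : Finset F}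
  {x : F}

theorem real_mono (h : D' ⊆ D) : C.real D' ⊆ C.real D :=
  biUnion_subset_biUnion_left h

/-- The characteristic map of a face `x` of `D`, as a map into the realization of `D`. -/
def realCharMap (hx : x ∈ D) :
    C(closedBall (0 : EuclideanSpace ℝ (Fin (C.dim x))) 1, C.real D) :=
  ⟨fun u ↦ ⟨C.charMap x u, mem_biUnion hx (mem_range_self u)⟩,
    (C.continuous_charMap x).subtype_mk _⟩

theorem realCharMap_mem_range_inclusion_iff (hDD' : D' ⊆ D) (hx : x ∈ D)
    {u : closedBall (0 : EuclideanSpace ℝ (Fin (C.dim x))) 1} :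
    C.realCharMap hx u ∈ range (ContinuousMap.inclusion (C.real_mono hDD')) ↔
      C.charMap x u ∈ C.real D' := by
  refine ⟨fun ⟨y, hy⟩ ↦ ?_, fun hu ↦ ⟨⟨_, hu⟩, rfl⟩⟩
  have hyu : (y : X) = C.charMap x u := congrArg Subtype.val hy
  exact hyu ▸ y.2

variable [T2Space X]

theorem isClosedCover_real (hDD' : D' ⊆ D) (hx : x ∈ D)
    (hcell : ∀ y ∈ D, y ∉ D' → C.cell y ⊆ C.cell x) :
    IsClosedCover (ContinuousMap.inclusion (C.real_mono hDD')) (C.realCharMap hx) where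
  isClosedEmbedding_left :=
    .inclusion (real_mono hDD') (isClosed_real.preimage continuous_subtype_val)
  isClosedEmbedding_right := (realCharMap hx).continuous.isClosedEmbedding fun u v huv ↦
    C.injective_charMap x (congrArg Subtype.val huv)
  range_union_range := by
    refine eq_univ_of_forall fun ⟨y, hy⟩ ↦ ?_
    obtain ⟨g, hg, hyg⟩ := mem_iUnion₂.1 hy
    by_cases hgD' : g ∈ D'
    · exact .inl ⟨⟨y, mem_biUnion hgD' hyg⟩, rfl⟩
    · obtain ⟨u, hu⟩ := hcell g hg hgD' hyg
      exact .inr ⟨u, Subtype.ext hu⟩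

theorem Subcomplex.norm_eq_one_of_charMap_mem_real (hD : C.Subcomplex D) (hx : x ∉ D)
    {u : closedBall (0 : EuclideanSpace ℝ (Fin (C.dim x))) 1} (hu : C.charMap x u ∈ C.real D) :
    ‖(u : EuclideanSpace ℝ (Fin (C.dim x)))‖ = 1 :=
  (mem_closedBall_zero_iff.1 u.2).eq_of_not_lt fun hlt ↦
    hx ((hD.mem_real_iff (charMap_mem_openCell_iff.2 hlt)).1 hu)

theorem exists_face_of_mem_range_attachingMap {y : X} (hy : y ∈ range (C.attachingMap x)) :
    ∃ g, y ∈ C.openCell g ∧ C.cell g ⊆ C.cell x ∧ C.dim g < C.dim x := by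
  obtain ⟨g, hg⟩ := C.exists_mem_openCell y
  exact ⟨g, hg, cell_subset_cell_of_mem_openCell hg (range_attachingMap_subset_cell hy),
    dim_lt_of_mem_openCell_of_mem_range_attachingMap hg hy⟩

theorem Subcomplex.charMap_mem_real_iff (hD : C.Subcomplex D) (hx : x ∉ D)
    (hfaces : ∀ g, C.cell g ⊆ C.cell x → C.dim g < C.dim x → g ∈ D)
    {u : closedBall (0 : EuclideanSpace ℝ (Fin (C.dim x))) 1} :
    C.charMap x u ∈ C.real D ↔ ‖(u : EuclideanSpace ℝ (Fin (C.dim x)))‖ = 1 := by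
  refine ⟨hD.norm_eq_one_of_charMap_mem_real hx, fun hu ↦ ?_⟩
  obtain ⟨g, hug, hgx, hdim⟩ := exists_face_of_mem_range_attachingMap
    (mem_range_self (f := C.attachingMap x) ⟨u, mem_sphere_zero_iff_norm.2 hu⟩)
  exact (hD.mem_real_iff hug).2 (hfaces g hgx hdim)

variable {s t : F}

theorem exists_map_sphere_of_facet (hst : C.toSetup.facet s t) :
    ∃ σ : C(closedBall (0 : EuclideanSpace ℝ (Fin (C.dim s))) 1,
        sphere (0 : EuclideanSpace ℝ (Fin (C.dim t))) 1),
      ∀ u, C.attachingMap t (σ u) = C.charMap s u := by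
  obtain ⟨hne, hcell, hdim⟩ := hst
  refine exists_continuousMap_lift ((C.attachingMap t).continuous.isClosedEmbedding
    ((C.injective_charMap t).comp (inclusion_injective _))).isInducing
    ⟨C.charMap s, C.continuous_charMap s⟩ fun u ↦ ?_
  refine (mem_cell_iff.1 (hcell (mem_range_self u))).resolve_left fun hu ↦ ?_
  obtain rfl | hlt := eq_or_dim_lt_of_mem_openCell_of_mem_cell hu (mem_range_self u)
  exacts [hne rfl, by lia]

variable [DecidableEq F]

theorem isClosedCover_real_insert :
    IsClosedCover (ContinuousMap.inclusion (C.real_mono (D.subset_insert x)))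
      (C.realCharMap (D.mem_insert_self x)) :=
  isClosedCover_real (D.subset_insert x) _ fun _ hy hyD ↦
    ((Finset.mem_insert.1 hy).resolve_right hyD ▸ Subset.rfl)

theorem Subcomplex.realCharMap_insert_mem_range_iff (hD : C.Subcomplex D)
    (hDx : C.Subcomplex (insert x D)) (hx : x ∉ D)
    (u : closedBall (0 : EuclideanSpace ℝ (Fin (C.dim x))) 1) :
    C.realCharMap (D.mem_insert_self x) u ∈
        range (ContinuousMap.inclusion (C.real_mono (D.subset_insert x))) ↔
      ‖(u : EuclideanSpace ℝ (Fin (C.dim x)))‖ = 1 := by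
  rw [realCharMap_mem_range_inclusion_iff (D.subset_insert x)]
  refine hD.charMap_mem_real_iff hx fun g hgx hdim ↦ ?_
  exact (Finset.mem_insert.1 (hDx g x hgx (D.mem_insert_self x))).resolve_left fun h ↦
    hdim.ne (congrArg C.dim h)

theorem exists_retraction_of_facet (hst : C.toSetup.facet s t) (hD' : C.Subcomplex D)
    (hD : C.Subcomplex (insert s (insert t D))) (hs : s ∉ D) (ht : t ∉ D) :
    ∃ r : C(closedBall (0 : EuclideanSpace ℝ (Fin (C.dim t))) 1, C.attachingMap t ⁻¹' C.real D),
      ∀ a : C.attachingMap t ⁻¹' C.real D, r (inclusion sphere_subset_closedBall a) = a := by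
  obtain ⟨σ, hσ⟩ := exists_map_sphere_of_facet hst
  obtain ⟨hne, hcell, hdim⟩ := hst
  have mem_of_face : ∀ g, C.cell g ⊆ C.cell t → g ≠ s → g ≠ t → g ∈ D := fun g hgt hgs hgt' ↦ by
    have hg := hD g t hgt (by simp)
    simpa [hgs, hgt'] using hg
  refine exists_retraction_closedBall_of_cell
    ((isClosed_real (D := D)).preimage (C.attachingMap t).continuous) σ
    (σ.continuous.isClosedEmbedding fun u v huv ↦ C.injective_charMap s ?_)
    (eq_univ_of_forall fun w ↦ ?_) fun u ↦ ?_
  · rw [← hσ, huv, hσ]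
  · obtain ⟨g, hwg, hgt, hlt⟩ := exists_face_of_mem_range_attachingMap
      (mem_range_self (f := C.attachingMap t) w)
    obtain rfl | hgs := eq_or_ne g s
    · obtain ⟨u, -, hu⟩ := hwg
      refine .inr ⟨u, inclusion_injective sphere_subset_closedBall (C.injective_charMap t ?_)⟩
      exact (hσ u).trans hu
    · exact .inl ((hD'.mem_real_iff hwg).2 (mem_of_face g hgt hgs (by rintro rfl; lia)))
  · rw [mem_preimage, hσ]
    exact hD'.charMap_mem_real_iff hs fun g hgs hlt ↦
      mem_of_face g (hgs.trans hcell) (by rintro rfl; lia) (by rintro rfl; lia)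

theorem nonempty_homotopyEquiv_real_of_facet (hst : C.toSetup.facet s t) (hD' : C.Subcomplex D)
    (hD : C.Subcomplex (insert s (insert t D))) (hs : s ∉ D) (ht : t ∉ D) :
    Nonempty (ContinuousMap.HomotopyEquiv (C.real D) (C.real (insert s (insert t D)))) := by
  obtain ⟨r, hr⟩ := exists_retraction_of_facet hst hD' hD hs ht
  have hDD' : D ⊆ insert s (insert t D) := (D.subset_insert t).trans (Finset.subset_insert s _)
  have htD : t ∈ insert s (insert t D) := by simp
  have hcover : IsClosedCover (ContinuousMap.inclusion (C.real_mono hDD')) (C.realCharMap htD) :=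
    isClosedCover_real hDD' htD fun y hy hyD ↦ by
      obtain rfl | rfl : y = s ∨ y = t := by simpa [hyD] using hy
      exacts [hst.2.1, Subset.rfl]
  let ρ : C(closedBall (0 : EuclideanSpace ℝ (Fin (C.dim t))) 1,
      closedBall (0 : EuclideanSpace ℝ (Fin (C.dim t))) 1) :=
    ⟨fun u ↦ inclusion sphere_subset_closedBall (r u), by fun_prop⟩
  refine hcover.nonempty_homotopyEquiv (convex_closedBall _ _) ρ (fun u ↦ ?_) fun u hu ↦ ?_
  · exact (realCharMap_mem_range_inclusion_iff hDD' htD).2 (r u).2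
  · rw [realCharMap_mem_range_inclusion_iff hDD'] at hu
    have hu_norm := hD'.norm_eq_one_of_charMap_mem_real ht hu
    exact congrArg (inclusion sphere_subset_closedBall ·.1)
      (hr ⟨⟨u, mem_sphere_zero_iff_norm.2 hu_norm⟩, hu⟩)

end RegularCW

end Attaching

section MorseMatching

theorem exists_forall_not_facet_of_not_hasClosedGradientPath {F : Type} {S : MorseSetup F}
    {Φ : Finset (F × F)} (hΦ : ¬ HasClosedGradientPath S Φ) (hne : Φ.Nonempty) :
    ∃ p ∈ Φ, ∀ q ∈ Φ, q.1 ≠ p.1 → ¬ S.facet p.1 q.2 := by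
  contrapose! hΦ
  have hpred : ∀ p : Φ, ∃ q : Φ, q.1.1 ≠ p.1.1 ∧ S.facet p.1.1 q.1.2 := fun p ↦ by
    obtain ⟨q, hq, hqp⟩ := hΦ p.1 p.2
    exact ⟨⟨q, hq⟩, hqp⟩
  choose pred hpred using hpred
  obtain ⟨p₀, hp₀⟩ := hne
  let s : ℕ → Φ := fun i ↦ pred^[i] ⟨p₀, hp₀⟩
  obtain ⟨a, b, hab, hs_eq⟩ : ∃ a b, a < b ∧ s a = s b := by
    obtain ⟨a, b, hab, hs_eq⟩ := Finite.exists_ne_map_eq_of_infinite s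
    exact hab.lt_or_gt.elim (⟨a, b, ·, hs_eq⟩) (⟨b, a, ·, hs_eq.symm⟩)
  refine ⟨b - a, fun i ↦ (s (b - i)).1.1, fun i ↦ (s (b - i)).1.2, by lia,
    fun i _ ↦ (s (b - i)).2, fun i hi ↦ ?_, ?_⟩
  · have hs_pred : s (b - i) = pred (s (b - (i + 1))) := by
      rw [show b - i = b - (i + 1) + 1 by lia]
      exact iterate_succ_apply' _ _ _
    simp only [hs_pred]
    exact ⟨(hpred _).1.symm, (hpred _).2⟩
  · simp only [Nat.sub_zero, Nat.sub_sub_self hab.le, hs_eq]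

theorem IsMorseMatching.mono {F : Type} {S : MorseSetup F} {Φ Ψ : Finset (F × F)}
    (hΦ : IsMorseMatching S Φ) (h : Ψ ⊆ Φ) : IsMorseMatching S Ψ := by
  refine ⟨⟨fun p hp ↦ hΦ.1.1 p (h hp), fun p hp q hq ↦ hΦ.1.2 p (h hp) q (h hq)⟩, ?_⟩
  rintro ⟨k, σ, T, hk, hmem, hpath⟩
  exact hΦ.2 ⟨k, σ, T, hk, fun i hi ↦ h (hmem i hi), hpath⟩

section Erase

variable {F : Type} [DecidableEq F] {S : MorseSetup F} {Φ : Finset (F × F)} {D : Finset F}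
  {p : F × F} {x : F}

theorem IsDVF.mem_erase_erase_of_mem_erase (hΦ : IsDVF S Φ) (hmem : ∀ q ∈ Φ, q.1 ∈ D ∧ q.2 ∈ D)
    (hp : p ∈ Φ) :
    ∀ q ∈ Φ.erase p, q.1 ∈ (D.erase p.1).erase p.2 ∧ q.2 ∈ (D.erase p.1).erase p.2 := by
  intro q hq
  obtain ⟨hqp, hq⟩ := Finset.mem_erase.1 hq
  obtain ⟨h₁₁, h₁₂, h₂₁, h₂₂⟩ := hΦ.2 q hq p hp hqp
  simp only [Finset.mem_erase]
  exact ⟨⟨h₁₂, h₁₁, (hmem q hq).1⟩, h₂₂, h₂₁, (hmem q hq).2⟩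

theorem mem_erase_erase_and_isCritical_erase_iff (hp : p ∈ Φ) :
    x ∈ (D.erase p.1).erase p.2 ∧ IsCritical (Φ.erase p) x ↔ x ∈ D ∧ IsCritical Φ x := by
  simp only [Finset.mem_erase]
  constructor
  · rintro ⟨⟨h₂, h₁, hxD⟩, hx⟩
    refine ⟨hxD, fun q hq ↦ ?_⟩
    obtain rfl | hqp := eq_or_ne q p
    exacts [⟨h₁, h₂⟩, hx q (Finset.mem_erase.2 ⟨hqp, hq⟩)]
  · rintro ⟨hxD, hx⟩
    exact ⟨⟨(hx p hp).2, (hx p hp).1, hxD⟩, fun q hq ↦ hx q (Finset.mem_of_mem_erase hq)⟩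

end Erase

namespace RegularCW

variable {F X : Type} [Fintype F] [TopologicalSpace X] {C : RegularCW F X}
  {D : Finset F} {Φ : Finset (F × F)} {s t v x : F}

theorem eq_or_dim_lt_of_cell_subset (h : C.cell s ⊆ C.cell t) : s = t ∨ C.dim s < C.dim t :=
  eq_or_dim_lt_of_mem_openCell_of_mem_cell
    (charMap_mem_openCell_iff (u := ⟨0, by simp⟩).2 (by simp)) (h (mem_range_self _))

theorem subcomplex_singleton (hv : C.dim v = 0) : C.Subcomplex {v} := by
  rintro s t hst ht
  obtain rfl := Finset.mem_singleton.1 ht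
  exact Finset.mem_singleton.2 ((eq_or_dim_lt_of_cell_subset hst).resolve_right (by lia))

variable [DecidableEq F]

theorem Subcomplex.erase (hD : C.Subcomplex D) (hx : ∀ y ∈ D, C.dim y ≤ C.dim x) :
    C.Subcomplex (D.erase x) := by
  intro s t hst ht
  obtain ⟨htx, htD⟩ := Finset.mem_erase.1 ht
  refine Finset.mem_erase.2 ⟨?_, hD s t hst htD⟩
  rintro rfl
  exact (eq_or_dim_lt_of_cell_subset hst).elim (htx ·.symm) (hx t htD).not_gt

theorem Subcomplex.erase_erase (hD : C.Subcomplex D) (hst : C.toSetup.facet s t)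
    (ht : ∀ y ∈ D, C.dim y ≤ C.dim t)
    (hs : ∀ y ∈ D, C.toSetup.facet s y → y = t) : C.Subcomplex ((D.erase s).erase t) := by
  intro σ τ hστ hτ
  obtain ⟨hτt, hτs, hτD⟩ := by simpa only [Finset.mem_erase] using hτ
  have hdim := ht τ hτD
  have hst_dim : C.dim t = C.dim s + 1 := hst.2.2
  simp only [Finset.mem_erase]
  refine ⟨?_, ?_, hD σ τ hστ hτD⟩
  · rintro rfl
    exact (eq_or_dim_lt_of_cell_subset hστ).elim (hτt ·.symm) hdim.not_gt
  · rintro rfl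
    have hlt := (eq_or_dim_lt_of_cell_subset hστ).resolve_left (hτs ·.symm)
    exact hτt (hs τ hτD ⟨Ne.symm hτs, hστ, by lia⟩)

theorem exists_subcomplex_erase_erase (hΦ : IsMorseMatching C.toSetup Φ) (hD : C.Subcomplex D)
    (hx : x ∈ D) (hmax : ∀ y ∈ D, C.dim y ≤ C.dim x)
    (htop : ∀ y ∈ D, C.dim y = C.dim x → ∃ p ∈ Φ, p.2 = y) :
    ∃ p ∈ Φ, C.Subcomplex ((D.erase p.1).erase p.2) := by
  obtain ⟨p₀, hp₀, rfl⟩ := htop x hx rfl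
  let Ψ := Φ.filter fun p ↦ C.dim p.2 = C.dim p₀.2
  have hΨ : Ψ ⊆ Φ := Finset.filter_subset _ _
  obtain ⟨p, hp, hfree⟩ := exists_forall_not_facet_of_not_hasClosedGradientPath
    (hΦ.mono hΨ).2 ⟨p₀, Finset.mem_filter.2 ⟨hp₀, rfl⟩⟩
  have hp_dim : C.dim p.2 = C.dim p₀.2 := (Finset.mem_filter.1 hp).2
  refine ⟨p, hΨ hp, hD.erase_erase (hΦ.1.1 p (hΨ hp)) (hp_dim ▸ hmax) fun y hy hpy ↦ ?_⟩
  have hpy_dim : C.dim y = C.dim p.1 + 1 := hpy.2.2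
  have hpp_dim : C.dim p.2 = C.dim p.1 + 1 := (hΦ.1.1 p (hΨ hp)).2.2
  obtain ⟨q, hq, rfl⟩ := htop y hy (by lia)
  have hqp : q.1 = p.1 := by
    by_contra hqp
    exact hfree q (Finset.mem_filter.2 ⟨hq, by lia⟩) hqp hpy
  by_contra hne
  exact (hΦ.1.2 q hq p (hΨ hp) (ne_of_apply_ne Prod.snd hne)).1 hqp

theorem exists_subcomplex_erase (hΦ : IsMorseMatching C.toSetup Φ) (hD : C.Subcomplex D)
    (hmem : ∀ p ∈ Φ, p.1 ∈ D ∧ p.2 ∈ D) (hv : v ∈ D) (hv₀ : C.dim v = 0) (hne : D ≠ {v}) :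
    (∃ x ∈ D, x ≠ v ∧ IsCritical Φ x ∧ C.Subcomplex (D.erase x)) ∨
      ∃ p ∈ Φ, C.Subcomplex ((D.erase p.1).erase p.2) := by
  obtain ⟨m, hm, hmax⟩ := D.exists_max_image C.dim ⟨v, hv⟩
  by_cases hcrit : ∃ x ∈ D, x ≠ v ∧ IsCritical Φ x ∧ C.dim x = C.dim m
  · obtain ⟨x, hx, hxv, hxc, hxm⟩ := hcrit
    exact .inl ⟨x, hx, hxv, hxc, hD.erase (hxm ▸ hmax)⟩
  have hpair_dim : ∀ p ∈ Φ, C.dim p.2 = C.dim p.1 + 1 := fun p hp ↦ (hΦ.1.1 p hp).2.2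
  have htop : ∀ y ∈ D, y ≠ v → C.dim y = C.dim m → ∃ p ∈ Φ, p.2 = y := by
    intro y hy hyv hym
    have hyc : ¬ IsCritical Φ y := fun hyc ↦ hcrit ⟨y, hy, hyv, hyc, hym⟩
    simp only [IsCritical, not_forall, not_and_or, not_not] at hyc
    obtain ⟨p, hp, rfl | rfl⟩ := hyc
    · have hle := hmax p.2 (hmem p hp).2
      have hp_dim := hpair_dim p hp
      lia
    · exact ⟨p, hp, rfl⟩
  obtain ⟨x, hx, hxv⟩ : ∃ x ∈ D, x ≠ v := by
    by_contra! hall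
    exact hne (Finset.eq_singleton_iff_unique_mem.2 ⟨hv, hall⟩)
  have hm_pos : 0 < C.dim m := by
    by_contra hm₀
    have hxm := hmax x hx
    obtain ⟨p, hp, rfl⟩ := htop x hx hxv (by lia)
    have hp_dim := hpair_dim p hp
    lia
  exact .inr (exists_subcomplex_erase_erase hΦ hD hm hmax fun y hy hym ↦
    htop y hy (by rintro rfl; lia) hym)

variable (C v) in
/-- `C.BuiltFrom v D K` says that the subcomplex `D` arises from the vertex `v` by attaching, one
at a time, the cells in `K` along their boundary spheres and by elementary expansions, each of
which adds a cell together with one of its facets. -/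
inductive BuiltFrom : Finset F → Finset F → Prop
  | vertex (hv : C.dim v = 0) : BuiltFrom {v} ∅
  | attach {D K : Finset F} {x : F} (h : BuiltFrom D K) (hx : x ∉ D)
      (hDx : C.Subcomplex (insert x D)) : BuiltFrom (insert x D) (insert x K)
  | expand {D K : Finset F} {s t : F} (h : BuiltFrom D K) (hst : C.toSetup.facet s t)
      (hs : s ∉ D) (ht : t ∉ D) (hDst : C.Subcomplex (insert s (insert t D))) :
      BuiltFrom (insert s (insert t D)) K

theorem BuiltFrom.subcomplex {K : Finset F} : C.BuiltFrom v D K → C.Subcomplex D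
  | vertex hv => subcomplex_singleton hv
  | attach _ _ hDx => hDx
  | expand _ _ _ _ hDst => hDst

theorem exists_builtFrom (hΦ : IsMorseMatching C.toSetup Φ) (hD : C.Subcomplex D)
    (hmem : ∀ p ∈ Φ, p.1 ∈ D ∧ p.2 ∈ D) (hv : v ∈ D) (hv₀ : C.dim v = 0)
    (hvc : IsCritical Φ v) :
    ∃ K, C.BuiltFrom v D K ∧ ∀ y, y ∈ K ↔ y ∈ D ∧ y ≠ v ∧ IsCritical Φ y := by
  induction hn : D.card using Nat.strong_induction_on generalizing D Φ with
  | _ n ih =>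
    subst hn
    obtain rfl | hne := eq_or_ne D {v}
    · exact ⟨∅, .vertex hv₀, by grind⟩
    obtain ⟨x, hx, hxv, hxc, hDx⟩ | ⟨p, hp, hDp⟩ :=
      exists_subcomplex_erase hΦ hD hmem hv hv₀ hne
    · have hmem' : ∀ p ∈ Φ, p.1 ∈ D.erase x ∧ p.2 ∈ D.erase x := fun p hp ↦
        ⟨Finset.mem_erase.2 ⟨(hxc p hp).1.symm, (hmem p hp).1⟩,
          Finset.mem_erase.2 ⟨(hxc p hp).2.symm, (hmem p hp).2⟩⟩
      obtain ⟨K, hK, hK_mem⟩ := ih _ (Finset.card_erase_lt_of_mem hx) hΦ hDx hmem'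
        (Finset.mem_erase.2 ⟨hxv.symm, hv⟩) hvc rfl
      have hbuilt := hK.attach (D.notMem_erase x) (by rwa [Finset.insert_erase hx])
      rw [Finset.insert_erase hx] at hbuilt
      exact ⟨insert x K, hbuilt, by grind⟩
    · obtain ⟨hp₁, hp₂⟩ := hmem p hp
      have hfacet : C.toSetup.facet p.1 p.2 := hΦ.1.1 p hp
      have hp₂' : p.2 ∈ D.erase p.1 := Finset.mem_erase.2 ⟨hfacet.1.symm, hp₂⟩
      obtain ⟨hvD, hvc'⟩ := (mem_erase_erase_and_isCritical_erase_iff hp).2 ⟨hv, hvc⟩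
      obtain ⟨K, hK, hK_mem⟩ := ih _
        ((Finset.card_erase_lt_of_mem hp₂').trans (Finset.card_erase_lt_of_mem hp₁))
        (hΦ.mono (Φ.erase_subset p)) hDp (hΦ.1.mem_erase_erase_of_mem_erase hmem hp) hvD hvc' rfl
      have hDst : insert p.1 (insert p.2 ((D.erase p.1).erase p.2)) = D := by
        rw [Finset.insert_erase hp₂', Finset.insert_erase hp₁]
      have hbuilt := hK.expand hfacet (by simp) (Finset.notMem_erase _ _) (by rwa [hDst])
      rw [hDst] at hbuilt
      refine ⟨K, hbuilt, fun y ↦ ?_⟩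
      rw [hK_mem, and_left_comm, mem_erase_erase_and_isCritical_erase_iff hp, and_left_comm]

end RegularCW

end MorseMatching

section Contractibility

theorem exists_not_nullhomotopic_of_homotopyEquiv {Y Y' Z : Type*} [TopologicalSpace Y]
    [TopologicalSpace Y'] [TopologicalSpace Z] (e : ContinuousMap.HomotopyEquiv Y Y')
    {q : C(Y, Z)} (hq : ¬ q.Nullhomotopic) : ∃ q' : C(Y', Z), ¬ q'.Nullhomotopic := by
  refine ⟨q.comp e.invFun, fun hnull ↦ hq ?_⟩
  obtain ⟨z, hz⟩ := hnull.comp_left e.toFun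
  exact ⟨z, (ContinuousMap.Homotopic.comp (.refl q) e.left_inv).symm.trans hz⟩

namespace RegularCW

variable {F X : Type} [Fintype F] [TopologicalSpace X] [T2Space X] {C : RegularCW F X}
  {D K : Finset F} {v : F} {j : ℕ}

theorem contractibleSpace_cell (v : F) : ContractibleSpace (C.cell v) :=
  have := (convex_closedBall (0 : EuclideanSpace ℝ (Fin (C.dim v))) 1).contractibleSpace
    (nonempty_closedBall.2 zero_le_one)
  isClosedEmbedding_charMap.isEmbedding.toHomeomorph.symm.contractibleSpace

variable [DecidableEq F]

theorem BuiltFrom.contractibleSpace_real (h : C.BuiltFrom v D ∅) :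
    ContractibleSpace (C.real D) := by
  generalize hK : (∅ : Finset F) = K at h
  induction h with
  | vertex =>
    have hreal : C.real {v} = C.cell v := Finset.set_biUnion_singleton v C.cell
    exact hreal ▸ contractibleSpace_cell v
  | attach => exact absurd hK.symm (Finset.insert_ne_empty _ _)
  | expand h hst hs ht hDst ih =>
    obtain ⟨e⟩ := nonempty_homotopyEquiv_real_of_facet hst h.subcomplex hDst hs ht
    have := ih hK
    exact e.symm.contractibleSpace

theorem BuiltFrom.exists_not_nullhomotopic (h : C.BuiltFrom v D K) (hK : K.Nonempty)
    (hj : ∀ x ∈ K, C.dim x = j) :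
    ∃ q : C(C.real D, sphere (0 : WithLp 2 (EuclideanSpace ℝ (Fin j) × ℝ)) 1),
      ¬ q.Nullhomotopic := by
  induction h with
  | vertex => exact absurd hK Finset.not_nonempty_empty
  | @attach D K x h hx hDx ih =>
    obtain rfl := hj x (K.mem_insert_self x)
    obtain rfl | hK := K.eq_empty_or_nonempty
    · have := h.contractibleSpace_real
      exact isClosedCover_real_insert.exists_not_nullhomotopic
        (h.subcomplex.realCharMap_insert_mem_range_iff hDx hx)
    · obtain ⟨q, hq⟩ := ih hK fun y hy ↦ hj y (Finset.mem_insert_of_mem hy)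
      obtain ⟨q', rfl⟩ := (isClosedCover_real_insert (C := C) (D := D)
        (x := x)).exists_extension_sphere isClosed_closedBall.isClosedEmbedding_subtypeVal
        (by simp [(WithLp.linearEquiv 2 ℝ _).finrank_eq]) q
      exact ⟨q', fun hq' ↦ hq (hq'.comp_left _)⟩
  | expand h hst hs ht hDst ih =>
    obtain ⟨e⟩ := nonempty_homotopyEquiv_real_of_facet hst h.subcomplex hDst hs ht
    obtain ⟨q, hq⟩ := ih hK hj
    exact exists_not_nullhomotopic_of_homotopyEquiv e hq

theorem BuiltFrom.contractibleSpace_real_iff (h : C.BuiltFrom v D K) (hj : ∀ x ∈ K, C.dim x = j) :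
    ContractibleSpace (C.real D) ↔ K = ∅ := by
  refine ⟨fun _ ↦ ?_, fun hK ↦ (hK ▸ h).contractibleSpace_real⟩
  by_contra hK
  obtain ⟨q, hq⟩ := h.exists_not_nullhomotopic (Finset.nonempty_iff_ne_empty.2 hK) hj
  exact hq ((id_nullhomotopic (C.real D)).comp_right q)

end RegularCW

section RestrictMatching

theorem not_outwardlyMatched_of_isCritical {F : Type} {Φ : Finset (F × F)} {D : Finset F} {x : F}
    (hx : IsCritical Φ x) : ¬ OutwardlyMatched Φ D x := by
  rintro ⟨-, p, hp, ⟨rfl, -⟩ | ⟨rfl, -⟩⟩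
  exacts [(hx p hp).1 rfl, (hx p hp).2 rfl]

variable {F X : Type} [Fintype F] [TopologicalSpace X] {C : RegularCW F X} {D : Finset F}
  {Φ : Finset (F × F)} {x : F}

/-- The pairs of a matching both of whose faces lie in the subcomplex `D`. As `D` is closed under
passing to faces, it suffices to test the larger face of a pair. -/
def restrictMatching [DecidableEq F] (Φ : Finset (F × F)) (D : Finset F) : Finset (F × F) :=
  Φ.filter (·.2 ∈ D)

theorem mem_of_mem_restrictMatching [DecidableEq F] (hΦ : IsDVF C.toSetup Φ)
    (hD : C.Subcomplex D) {p : F × F} (hp : p ∈ restrictMatching Φ D) : p.1 ∈ D ∧ p.2 ∈ D := by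
  obtain ⟨hp, hpD⟩ := Finset.mem_filter.1 hp
  exact ⟨hD p.1 p.2 (hΦ.1 p hp).2.1 hpD, hpD⟩

theorem isCritical_restrictMatching_iff [DecidableEq F] (hΦ : IsDVF C.toSetup Φ)
    (hD : C.Subcomplex D) (hx : x ∈ D) :
    IsCritical (restrictMatching Φ D) x ↔ IsCritical Φ x ∨ OutwardlyMatched Φ D x := by
  constructor
  · rw [or_iff_not_imp_left]
    intro hxD hxc
    simp only [IsCritical, not_forall, not_and_or, not_not] at hxc
    obtain ⟨p, hp, hpx⟩ := hxc
    have hp₂ : p.2 ∉ D := fun hp₂ ↦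
      hpx.elim (hxD p (Finset.mem_filter.2 ⟨hp, hp₂⟩)).1 (hxD p (Finset.mem_filter.2 ⟨hp, hp₂⟩)).2
    exact ⟨hx, p, hp, .inl ⟨(hpx.resolve_right fun h ↦ hp₂ (h ▸ hx)).symm, hp₂⟩⟩
  · rintro (hxc | ⟨-, p, hp, hpx⟩) q hq
    · exact hxc q (Finset.mem_filter.1 hq).1
    · have hqp : q ≠ p := by
        rintro rfl
        obtain ⟨hq₁, hq₂⟩ := mem_of_mem_restrictMatching hΦ hD hq
        exact hpx.elim (·.2 hq₂) (·.2 hq₁)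
      obtain ⟨h₁₁, h₁₂, h₂₁, h₂₂⟩ := hΦ.2 q (Finset.mem_filter.1 hq).1 p hp hqp
      obtain ⟨rfl, -⟩ | ⟨rfl, -⟩ := hpx
      exacts [⟨h₁₁.symm, h₂₁.symm⟩, ⟨h₁₂.symm, h₂₂.symm⟩]

theorem IsOutJCollapsingSeq.exists_isCollapsingSeqOn {j : ℕ}
    (hΦ : IsOutJCollapsingSeq C.toSetup Φ D j) (hD : C.Subcomplex D)
    (h : ∀ τ, ¬ OutwardlyMatched Φ D τ) :
    ∃ (Ψ : Finset (F × F)) (v : F), IsCollapsingSeqOn C.toSetup Ψ D v := by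
  classical
  obtain ⟨⟨v, hvD, hmorse, hv₀, hcrit⟩, -⟩ := hΦ
  refine ⟨restrictMatching Φ D, v, hmorse.mono (Finset.filter_subset _ _), hvD, hv₀,
    fun p hp ↦ mem_of_mem_restrictMatching hmorse.1 hD hp, fun x hx ↦ ?_⟩
  rw [isCritical_restrictMatching_iff hmorse.1 hD hx, or_iff_left (h x), hcrit]

end RestrictMatching

variable {F X : Type} [Fintype F] [TopologicalSpace X] [T2Space X] {C : RegularCW F X}
  {D : Finset F} {Φ : Finset (F × F)} {v : F}

theorem IsCollapsingSeqOn.contractibleSpace_real (hΦ : IsCollapsingSeqOn C.toSetup Φ D v)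
    (hD : C.Subcomplex D) : ContractibleSpace (C.real D) := by
  classical
  obtain ⟨hmorse, hv, hv₀, hmem, hcrit⟩ := hΦ
  obtain ⟨K, hK, hK_mem⟩ :=
    RegularCW.exists_builtFrom hmorse hD hmem hv hv₀ ((hcrit v hv).2 rfl)
  obtain rfl : K = ∅ := by
    refine Finset.eq_empty_of_forall_notMem fun y hy ↦ ?_
    obtain ⟨hyD, hyv, hyc⟩ := (hK_mem y).1 hy
    exact hyv ((hcrit y hyD).1 hyc)
  exact hK.contractibleSpace_real

theorem IsOutJCollapsingSeq.contractibleSpace_real_iff {j : ℕ}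
    (hΦ : IsOutJCollapsingSeq C.toSetup Φ D j) (hD : C.Subcomplex D) :
    ContractibleSpace (C.real D) ↔ ∀ τ, ¬ OutwardlyMatched Φ D τ := by
  classical
  obtain ⟨⟨v, hvD, hmorse, hv₀, hcrit⟩, hj⟩ := hΦ
  have hvc : IsCritical Φ v := (hcrit v).2 rfl
  obtain ⟨K, hK, hK_mem⟩ := RegularCW.exists_builtFrom
    (hmorse.mono (Finset.filter_subset _ _)) hD
    (fun p hp ↦ mem_of_mem_restrictMatching hmorse.1 hD hp) hvD hv₀
    ((isCritical_restrictMatching_iff hmorse.1 hD hvD).2 (.inl hvc))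
  have hK_iff : ∀ y, y ∈ K ↔ OutwardlyMatched Φ D y := fun y ↦ by
    rw [hK_mem]
    constructor
    · rintro ⟨hyD, hyv, hyc⟩
      exact ((isCritical_restrictMatching_iff hmorse.1 hD hyD).1 hyc).resolve_left
        fun hyc ↦ hyv ((hcrit y).1 hyc)
    · intro hy
      refine ⟨hy.1, ?_, (isCritical_restrictMatching_iff hmorse.1 hD hy.1).2 (.inr hy)⟩
      rintro rfl
      exact not_outwardlyMatched_of_isCritical hvc hy
  rw [hK.contractibleSpace_real_iff fun x hx ↦ hj x ((hK_iff x).1 hx),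
    Finset.eq_empty_iff_forall_notMem]
  exact forall_congr' fun y ↦ not_congr (hK_iff y)

end Contractibility

/-- Let `(C, D)` be an out-`j` collapsible pair with `D` nonempty. Then
`D` is contractible iff `D` is collapsible, and both are equivalent to the existence of an
out-`j` collapsing sequence for `(C, D)` with no outwardly matched faces. -/
theorem stmt2 {F X : Type} [Fintype F] [DecidableEq F] [TopologicalSpace X] [T2Space X]
    (C : RegularCW F X) (D : Finset F) (hD : C.Subcomplex D) (hDne : D.Nonempty)
    (j : ℕ) (Φ : Finset (F × F)) (hΦ : IsOutJCollapsingSeq C.toSetup Φ D j) :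
    (ContractibleSpace (C.real D) ↔
        ∃ (Ψ : Finset (F × F)) (v : F), IsCollapsingSeqOn C.toSetup Ψ D v) ∧
      (ContractibleSpace (C.real D) ↔
        ∃ Φ' : Finset (F × F), IsOutJCollapsingSeq C.toSetup Φ' D j ∧
          ∀ τ, ¬ OutwardlyMatched Φ' D τ) := by
  have key {Φ'} (hΦ' : IsOutJCollapsingSeq C.toSetup Φ' D j) := hΦ'.contractibleSpace_real_iff hD
  refine ⟨⟨fun h ↦ hΦ.exists_isCollapsingSeqOn hD ((key hΦ).1 h), ?_⟩,
    ⟨fun h ↦ ⟨Φ, hΦ, (key hΦ).1 h⟩, ?_⟩⟩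
  · rintro ⟨Ψ, v, hΨ⟩
    exact hΨ.contractibleSpace_real hD
  · rintro ⟨Φ', hΦ', hnone⟩
    exact (key hΦ').2 hnone
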